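/- Let G be a finite pseudo-solvable group. Then the complement Γ̄(G) of its prime graph is 3-colorable, and exactly one of the following three statements holds: (1) Γ̄(G) is triangle-free, i.e., there do not exist three distinct primes p, q, r dividing |G| such that G has no element of order pq, no element of order pr, and no element of order qr; (2) 2, 3, 5 all divide |G| and G has no element of order 6, 10, or 15; (3) there exists a prime p ∉ {2,3,5} dividing |G| such that 3 and 5 divide |G| and G has no element of order 3p, no element of order 5p, and no element of order 15. -/

import Mathlib

/-- A finite group is *pseudo-solvable* if it has a subnormal series whose factors are
all cyclic or isomorphic to the alternating group `A₅`. -/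
def IsPseudoSolvable (G : Type*) [Group G] : Prop :=
  ∃ (n : ℕ) (H : Fin (n + 1) → Subgroup G),
    H 0 = ⊥ ∧ H (Fin.last n) = ⊤ ∧
    ∀ i : Fin n, H i.castSucc ≤ H i.succ ∧
      ∃ hN : ((H i.castSucc).subgroupOf (H i.succ)).Normal,
        haveI := hN
        IsCyclic (H i.succ ⧸ (H i.castSucc).subgroupOf (H i.succ)) ∨
        Nonempty ((H i.succ ⧸ (H i.castSucc).subgroupOf (H i.succ)) ≃* alternatingGroup (Fin 5))

/-- The complement of the prime graph of `G` is triangle-free. -/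
def ComplementTriangleFree (G : Type*) [Group G] : Prop :=
  ¬ ∃ p q r : ℕ, p.Prime ∧ q.Prime ∧ r.Prime ∧ p ≠ q ∧ p ≠ r ∧ q ≠ r ∧
    p ∣ Nat.card G ∧ q ∣ Nat.card G ∧ r ∣ Nat.card G ∧
    (¬ ∃ g : G, orderOf g = p * q) ∧ (¬ ∃ g : G, orderOf g = p * r) ∧
    (¬ ∃ g : G, orderOf g = q * r)

/-- `{2,3,5}` is a triangle of the complement of the prime graph of `G`. -/
def Triangle235 (G : Type*) [Group G] : Prop :=
  2 ∣ Nat.card G ∧ 3 ∣ Nat.card G ∧ 5 ∣ Nat.card G ∧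
  (¬ ∃ g : G, orderOf g = 6) ∧ (¬ ∃ g : G, orderOf g = 10) ∧
  (¬ ∃ g : G, orderOf g = 15)

/-- `{p,3,5}` is a triangle of the complement of the prime graph of `G` for some
prime `p ∉ {2,3,5}`. -/
def TriangleP35 (G : Type*) [Group G] : Prop :=
  ∃ p : ℕ, p.Prime ∧ p ∉ ({2, 3, 5} : Set ℕ) ∧ p ∣ Nat.card G ∧
    3 ∣ Nat.card G ∧ 5 ∣ Nat.card G ∧
    (¬ ∃ g : G, orderOf g = 3 * p) ∧ (¬ ∃ g : G, orderOf g = 5 * p) ∧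
    (¬ ∃ g : G, orderOf g = 15)

/-!
Orient an edge `p q` of the complement of the prime graph as `p → q` when `G` has a quotient by a
normal subgroup of order prime to `p q` with an elementary abelian normal `p`-subgroup `V`: the
elements of order `q` then act on `V` without fixed points, as in a Frobenius group. Looking at a
chief factor just above a maximal normal subgroup of order prime to `p q`, every remaining edge
comes from a nonabelian chief factor; its simple factors are isomorphic to `A₅`. An element of prime
order `ℓ > 5` normalising such a factor centralises elements of each of the orders `2`, `3` and `5`,
because `ℓ` does not divide their number, so both ends of such an edge divide `60`. These edges are
oriented from the smaller to the larger prime.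

Fixed-point-free actions are rigid. If `p → q → r` then the module for `q → r` is cyclic, so `r`
does not divide the order of the commutator subgroup, whereas `r → s` would force it to; and a
Frobenius group `B ⋊ ⟨x⟩` cannot act on `V` with `x` fixed-point-free, so `p` and `r` are not
adjacent. Consequently no directed walk has length `3`, which gives the colouring, and the only
triangles are `{u, 3, 5}` with `3`, `5` joined by a nonsolvable edge and either `u = 2` or `u → 3`.
The two kinds of triangle exclude each other: if `u → 3` and `2`, `3` are adjacent, then the Klein
four-group and an element of order `3` normalising it in a section `A₅` lift to a Frobenius group
acting on the section for `u → 3`.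
-/
open scoped IsMulCommutative commutatorElement

section PrimeOrder

variable {G H : Type*} [Group G] [Group H]

theorem exists_orderOf_eq_of_surjective [Finite G] {f : G →* H} (hf : Function.Surjective f)
    (h : H) : ∃ g : G, orderOf g = orderOf h := by
  obtain ⟨g, rfl⟩ := hf h
  exact ⟨g ^ (orderOf g / orderOf (f g)),
    orderOf_pow_orderOf_div (orderOf_pos g).ne' (orderOf_map_dvd f g)⟩

theorem exists_orderOf_eq_mul_of_commute {p q : ℕ} (hp : p.Prime) (hq : q.Prime) (hpq : p ≠ q)
    {a b : G} (ha : orderOf a = p) (hb : orderOf b = q) (hab : Commute a b) :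
    ∃ g : G, orderOf g = p * q := by
  refine ⟨a * b, ?_⟩
  rw [hab.orderOf_mul_eq_mul_orderOf_of_coprime, ha, hb]
  rwa [ha, hb, Nat.coprime_primes hp hq]

theorem exists_mem_orderOf_eq (K : Subgroup G) [Finite K] {r : ℕ} (hr : r.Prime)
    (hK : r ∣ Nat.card K) : ∃ x ∈ K, orderOf x = r := by
  have : Fact r.Prime := ⟨hr⟩
  obtain ⟨x, hx⟩ := exists_prime_orderOf_dvd_card' (G := K) r hK
  exact ⟨x, x.2, by rw [Subgroup.orderOf_coe, hx]⟩

theorem orderOf_dvd_natCard_of_mem {K : Subgroup G} {x : G} (hx : x ∈ K) :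
    orderOf x ∣ Nat.card K := by
  rw [← Subgroup.orderOf_mk x hx]
  exact orderOf_dvd_natCard _

theorem orderOf_map_eq_of_not_dvd_card_ker (f : G →* H) {r : ℕ} (hr : r.Prime)
    (hker : ¬ r ∣ Nat.card f.ker) {x : G} (hx : orderOf x = r) : orderOf (f x) = r := by
  have : Fact r.Prime := ⟨hr⟩
  refine orderOf_eq_prime (by rw [← map_pow, ← hx, pow_orderOf_eq_one, map_one]) fun h ↦ hker ?_
  rw [← hx]
  exact orderOf_dvd_natCard_of_mem (f.mem_ker.2 h)

theorem orderOf_mk_eq_of_not_dvd_card {L : Subgroup G} [L.Normal] {r : ℕ} (hr : r.Prime)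
    (hL : ¬ r ∣ Nat.card L) {x : G} (hx : orderOf x = r) : orderOf (x : G ⧸ L) = r :=
  orderOf_map_eq_of_not_dvd_card_ker (QuotientGroup.mk' L) hr
    (by rwa [QuotientGroup.ker_mk']) hx

theorem mem_zpowers_of_mem_zpowers {x z : G} (hx : (orderOf x).Prime)
    (hz : z ∈ Subgroup.zpowers x) (hz1 : z ≠ 1) : x ∈ Subgroup.zpowers z := by
  have : Fact (orderOf x).Prime := ⟨hx⟩
  obtain ⟨k, hk⟩ := mem_zpowers_of_prime_card (Nat.card_zpowers x)
    (g := (⟨z, hz⟩ : Subgroup.zpowers x)) (g' := ⟨x, Subgroup.mem_zpowers x⟩)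
    fun h ↦ hz1 (congrArg Subtype.val h)
  exact ⟨k, congrArg Subtype.val hk⟩

theorem card_comap_mk' (L : Subgroup G) [L.Normal] (V : Subgroup (G ⧸ L)) :
    Nat.card (V.comap (QuotientGroup.mk' L)) = Nat.card L * Nat.card V :=
  QuotientGroup.card_preimage_mk L V

theorem eq_one_of_pow_eq_one_of_prime {x : G} {p n : ℕ} (hp : p.Prime) (hn : ¬ p ∣ n)
    (hxp : x ^ p = 1) (hxn : x ^ n = 1) : x = 1 := by
  rw [← pow_one x, ← (hp.coprime_iff_not_dvd.2 hn : p.gcd n = 1)]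
  exact pow_gcd_eq_one.2 ⟨hxp, hxn⟩

theorem eq_of_pow_eq_pow_of_coprime {x y : G} {r j : ℕ} (hr : r ≠ 0) (hx : x ^ r = 1)
    (hy : y ^ r = 1) (hj : j.Coprime r) (hxy : x ^ j = y ^ j) : x = y := by
  obtain ⟨k, -, hk⟩ := Nat.exists_mul_mod_eq_of_coprime 1 hj hr
  have pow_mul_eq {z : G} (hz : z ^ r = 1) : z ^ (j * k) = z := by
    rw [pow_eq_pow_of_modEq hk hz, pow_one]
  rw [← pow_mul_eq hx, ← pow_mul_eq hy, pow_mul, pow_mul, hxy]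

end PrimeOrder

section CoprimeAction

open Finset MonoidHom

variable {G M : Type*} [Group G] [CommGroup M]

theorem prod_range_pow_apply_eq_one {φ : G →* MulAut M} {y : G} {r : ℕ} (hy : y ^ r = 1)
    (hfix : FixedPointFree (φ y)) (m : M) : ∏ j ∈ range r, φ (y ^ j) m = 1 := by
  refine hfix _ ?_
  have telescope := (prod_range_succ' (fun j ↦ φ (y ^ j) m) r).symm.trans
    (prod_range_succ (fun j ↦ φ (y ^ j) m) r)
  rw [hy, pow_zero] at telescope
  simpa only [map_prod, ← MulAut.mul_apply, ← map_mul, ← pow_succ'] using mul_right_cancel telescope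

theorem inv_pow_mul_mul_pow_mem {B : Subgroup G} {x b : G}
    (hx : x ∈ Subgroup.normalizer (B : Set G)) (hb : b ∈ B) (j : ℕ) :
    (x ^ j)⁻¹ * (x * b) ^ j ∈ B := by
  induction j with
  | zero => simp
  | succ j ih =>
    have conj_mem : x⁻¹ * ((x ^ j)⁻¹ * (x * b) ^ j) * x⁻¹⁻¹ ∈ B :=
      (Subgroup.mem_normalizer_iff.1 (inv_mem hx) _).1 ih
    convert mul_mem conj_mem hb using 1
    rw [pow_succ, pow_succ]
    group

variable {φ : G →* MulAut M} {B : Subgroup G} {x : G} {r : ℕ}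

/-- For `0 < j < r` the map `b ↦ (x * b) ^ j` is a bijection from `B` onto the coset `x ^ j * B`. -/
theorem prod_mul_pow_apply_eq [Fintype B] (hr : r.Prime)
    (hx : x ∈ Subgroup.normalizer (B : Set G)) (hord : ∀ b ∈ B, (x * b) ^ r = 1)
    {j : ℕ} (hj : j ≠ 0) (hjr : j < r) (m : M) :
    ∏ b : B, φ ((x * b) ^ j) m = φ (x ^ j) (∏ b : B, φ b m) := by
  let toCoset : B → B := fun b ↦ ⟨_, inv_pow_mul_mul_pow_mem hx b.2 j⟩
  have toCoset_injective : Function.Injective toCoset := fun b c hbc ↦ by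
    have hpow : (x * (b : G)) ^ j = (x * c) ^ j := mul_left_cancel (congrArg Subtype.val hbc)
    exact Subtype.ext <| mul_left_cancel <| eq_of_pow_eq_pow_of_coprime hr.ne_zero
      (hord b b.2) (hord c c.2) (Nat.coprime_of_lt_prime hj hjr hr).symm hpow
  rw [map_prod, ← (Finite.injective_iff_bijective.1 toCoset_injective).prod_comp
    fun b : B ↦ φ (x ^ j) (φ b m)]
  simp only [toCoset, ← MulAut.mul_apply, ← map_mul, mul_inv_cancel_left]

theorem pow_card_eq_one_of_coset_fixedPointFree [Fintype B] (hr : r.Prime)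
    (hx : x ∈ Subgroup.normalizer (B : Set G)) (hord : ∀ b ∈ B, (x * b) ^ r = 1)
    (hfix : ∀ b ∈ B, FixedPointFree (φ (x * b))) {m : M} (hm : ∏ b : B, φ b m = 1) :
    m ^ Nat.card B = 1 := by
  have double_prod : ∏ j ∈ range r, ∏ b : B, φ ((x * b) ^ j) m = 1 := by
    rw [prod_comm]
    exact prod_eq_one fun b _ ↦ prod_range_pow_apply_eq_one (hord b b.2) (hfix b b.2) m
  rw [prod_eq_single_of_mem 0 (mem_range.2 hr.pos) fun j hj hj0 ↦ by
    rw [prod_mul_pow_apply_eq hr hx hord hj0 (mem_range.1 hj), hm, map_one]] at double_prod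
  simpa [Nat.card_eq_fintype_card] using double_prod

/-- The group `B` acts trivially because the `B`-norm of `φ b m / m` vanishes. -/
theorem le_ker_of_coset_fixedPointFree [Finite B] (hr : r.Prime)
    (hx : x ∈ Subgroup.normalizer (B : Set G)) (hord : ∀ b ∈ B, (x * b) ^ r = 1)
    (hfix : ∀ b ∈ B, FixedPointFree (φ (x * b))) (hM : ∀ m : M, m ^ Nat.card B = 1 → m = 1) :
    B ≤ φ.ker := by
  have := Fintype.ofFinite B
  refine fun b hb ↦ φ.mem_ker.2 <| MulEquiv.ext fun m ↦ div_eq_one.1 <| hM _ <|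
    pow_card_eq_one_of_coset_fixedPointFree hr hx hord hfix ?_
  simp only [map_div, prod_div_distrib, div_eq_one, ← MulAut.mul_apply, ← map_mul]
  exact Fintype.prod_equiv (Equiv.mulRight ⟨b, hb⟩) _ _ fun c ↦ rfl

theorem isConj_mul_of_forall_commute_eq_one [Finite B]
    (hx : x ∈ Subgroup.normalizer (B : Set G)) (hB : ∀ b ∈ B, Commute b x → b = 1)
    {b : G} (hb : b ∈ B) : IsConj x (x * b) := by
  let conjInv : MulAut B := B.normalizerMonoidHom ⟨x, hx⟩⁻¹
  have conjInv_apply (c : B) : (conjInv c : G) = x⁻¹ * c * x := by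
    change x⁻¹ * c * x⁻¹⁻¹ = _
    rw [inv_inv]
  have hfix : FixedPointFree conjInv := fun c hc ↦ Subtype.ext <| hB c c.2 <| by
    rw [Subtype.ext_iff, conjInv_apply, mul_assoc, inv_mul_eq_iff_eq_mul] at hc
    exact hc
  obtain ⟨c, hc⟩ := hfix.commutatorMap_surjective ⟨b, hb⟩⁻¹
  refine isConj_iff.2 ⟨c, ?_⟩
  have hcb : (c : G) * (x⁻¹ * c * x)⁻¹ = b⁻¹ := by
    simpa [div_eq_mul_inv, conjInv_apply] using congrArg Subtype.val hc
  rw [← inv_inv b, ← hcb]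
  group

theorem le_ker_of_frobenius [Finite B] (hr : r.Prime) (hxr : x ^ r = 1)
    (hx : x ∈ Subgroup.normalizer (B : Set G)) (hB : ∀ b ∈ B, Commute b x → b = 1)
    (hfix : FixedPointFree (φ x)) (hM : ∀ m : M, m ^ Nat.card B = 1 → m = 1) : B ≤ φ.ker := by
  have conj_eq (b : G) (hb : b ∈ B) : ∃ g, g * x * g⁻¹ = x * b :=
    isConj_iff.1 (isConj_mul_of_forall_commute_eq_one hx hB hb)
  refine le_ker_of_coset_fixedPointFree hr hx (fun b hb ↦ ?_) (fun b hb m hm ↦ ?_) hM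
  · obtain ⟨g, hg⟩ := conj_eq b hb
    rw [← hg, conj_pow, hxr, mul_one, mul_inv_cancel]
  · obtain ⟨g, hg⟩ := conj_eq b hb
    rw [← hg, map_mul, map_mul, MulAut.mul_apply, MulAut.mul_apply, map_inv] at hm
    have := hfix _ (MulEquiv.injective (φ g) (hm.trans (MulAut.apply_inv_self _ (φ g) m).symm))
    simpa using this

theorem isCyclic_of_forall_fixedPointFree {E : Type*} [CommGroup E] [Nontrivial M]
    {ψ : E →* MulAut M} {q : ℕ} (hq : q.Prime) (hE : ∀ e : E, e ^ q = 1)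
    (hfix : ∀ e ≠ 1, FixedPointFree (ψ e)) (hM : ∀ m : M, m ^ q = 1 → m = 1) : IsCyclic E := by
  have : Fact q.Prime := ⟨hq⟩
  rcases subsingleton_or_nontrivial E with _ | _
  · infer_instance
  obtain ⟨a, ha⟩ := exists_ne (1 : E)
  have card_zpowers : Nat.card (Subgroup.zpowers a) = q := by
    rw [Nat.card_zpowers, orderOf_eq_prime (hE a) ha]
  have : Finite (Subgroup.zpowers a) :=
    Nat.finite_of_card_ne_zero (by rw [card_zpowers]; exact hq.ne_zero)
  refine ⟨a, fun b ↦ by_contra fun hb ↦ ?_⟩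
  have ha_ker : a ∈ ψ.ker := by
    refine le_ker_of_coset_fixedPointFree (B := Subgroup.zpowers a) (x := b) hq ?_
      (fun c _ ↦ hE _) (fun c hc ↦ hfix _ fun hbc ↦ hb ?_) (by rwa [card_zpowers])
      (Subgroup.mem_zpowers a)
    · rw [Subgroup.normalizer_eq_top]
      exact Subgroup.mem_top b
    · rw [eq_inv_of_mul_eq_one_left hbc]
      exact inv_mem hc
  obtain ⟨m, hm⟩ := exists_ne (1 : M)
  exact hm (hfix a ha m (by rw [ψ.mem_ker.1 ha_ker, MulAut.one_apply]))

end CoprimeAction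

section SylowLift

variable {G H : Type*} [Group G] [Finite G] [Group H]

/-- Frattini argument: lift `W` to a Sylow subgroup of its preimage. -/
theorem exists_isPGroup_map_eq {f : G →* H} (hf : Function.Surjective f) {W : Subgroup H}
    [W.Normal] {q : ℕ} (hq : q.Prime) (hW : IsPGroup q W) :
    ∃ B : Subgroup G, IsPGroup q B ∧ B.map f = W ∧
      ∀ r : ℕ, r.Prime → r ∣ W.index → ∃ x ∈ Subgroup.normalizer (B : Set G), orderOf x = r := by
  have : Fact q.Prime := ⟨hq⟩
  have hfW := f.subgroupComap_surjective_of_surjective W hf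
  obtain ⟨P⟩ : Nonempty (Sylow q (W.comap f)) := inferInstance
  have map_P : (P : Subgroup (W.comap f)).map (f.subgroupComap W) = ⊤ := by
    rw [← Sylow.coe_mapSurjective hfW]
    exact ((P.mapSurjective hfW).is_maximal' (hW.to_subgroup ⊤) le_top).symm
  refine ⟨(P : Subgroup (W.comap f)).map (W.comap f).subtype, P.isPGroup'.map _, ?_, ?_⟩
  · rw [Subgroup.map_map, show f.comp (W.comap f).subtype = W.subtype.comp (f.subgroupComap W)
      from rfl, ← Subgroup.map_map, map_P, ← MonoidHom.range_eq_map, Subgroup.range_subtype]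
  · intro r hr hrW
    refine exists_mem_orderOf_eq _ hr ?_
    rw [← Subgroup.index_comap_of_surjective W hf, ← Subgroup.relIndex_top_right,
      ← Sylow.normalizer_sup_eq_top P, Subgroup.relIndex_sup_right] at hrW
    exact hrW.trans (Subgroup.relIndex_dvd_card _ _)

end SylowLift

section Solvable

variable {G H : Type*} [Group G] [Group H]

theorem isSolvable_of_le {A B : Subgroup G} (hAB : A ≤ B) (hB : Group.IsSolvable B) :
    Group.IsSolvable A :=
  have := hB
  Group.isSolvable_of_isSolvable_injective (Subgroup.inclusion_injective hAB)

theorem isSolvable_top_iff : Group.IsSolvable (⊤ : Subgroup G) ↔ Group.IsSolvable G :=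
  ⟨fun _ ↦ Group.isSolvable_of_surjective
    (f := (Subgroup.topEquiv : _ ≃* G).toMonoidHom) Subgroup.topEquiv.surjective,
    fun _ ↦ inferInstance⟩

theorem isSolvable_map (f : G →* H) {A : Subgroup G} (hA : Group.IsSolvable A) :
    Group.IsSolvable (A.map f) :=
  have := hA
  Group.isSolvable_of_surjective (f.subgroupMap_surjective A)

theorem isSolvable_comap {f : G →* H} (hf : Group.IsSolvable f.ker) {V : Subgroup H}
    (hV : Group.IsSolvable V) : Group.IsSolvable (V.comap f) := by
  have ker_le : f.ker ≤ V.comap f := fun x hx ↦ by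
    rw [Subgroup.mem_comap, f.mem_ker.1 hx]
    exact V.one_mem
  refine Group.isSolvable_of_ker_le_range (Subgroup.inclusion ker_le) (f.subgroupComap V) ?_
  intro x hx
  exact ⟨⟨x, congrArg Subtype.val hx⟩, rfl⟩

end Solvable

section MinimalNormal

variable {H : Type*} [Group H]

/-- A minimal normal subgroup: minimal among the nontrivial normal subgroups. -/
def IsMinimalNormal (N : Subgroup H) : Prop :=
  Minimal (fun M : Subgroup H ↦ M.Normal ∧ M ≠ ⊥) N

/-- Nontrivial elementary abelian `p`-subgroups. -/
structure IsElementaryAbelian (p : ℕ) (V : Subgroup H) : Prop where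
  ne_bot : V ≠ ⊥
  isMulCommutative : IsMulCommutative V
  pow_eq_one : ∀ v : V, v ^ p = 1

theorem exists_isMinimalNormal_le [Finite H] {C : Subgroup H} (hC : C.Normal) (hne : C ≠ ⊥) :
    ∃ N ≤ C, IsMinimalNormal N :=
  (Set.toFinite {M : Subgroup H | M.Normal ∧ M ≠ ⊥}).exists_le_minimal ⟨hC, hne⟩

theorem commute_of_disjoint_of_normal {M N : Subgroup H} (hM : M.Normal) (hN : N.Normal)
    (hMN : Disjoint M N) {x y : H} (hx : x ∈ M) (hy : y ∈ N) : Commute x y :=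
  Subgroup.commute_of_normal_of_disjoint M N hM hN hMN x y hx hy

namespace IsMinimalNormal

variable {N : Subgroup H}

theorem normal (hN : IsMinimalNormal N) : N.Normal := hN.prop.1

theorem ne_bot (hN : IsMinimalNormal N) : N ≠ ⊥ := hN.prop.2

theorem eq_of_le (hN : IsMinimalNormal N) {M : Subgroup H} (hM : M.Normal) (hMN : M ≤ N)
    (hne : M ≠ ⊥) : M = N :=
  hMN.antisymm (hN.le_of_le ⟨hM, hne⟩ hMN)

theorem disjoint_or_le (hN : IsMinimalNormal N) {M : Subgroup H} (hM : M.Normal) :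
    Disjoint M N ∨ N ≤ M := by
  have := hN.normal
  by_cases hMN : M ⊓ N = ⊥
  · exact .inl (disjoint_iff.2 hMN)
  · exact .inr (inf_eq_right.1 (hN.eq_of_le inferInstance inf_le_right hMN))

theorem normalClosure_eq (hN : IsMinimalNormal N) {A : Subgroup H} (hAN : A ≤ N) (hA : A ≠ ⊥) :
    Subgroup.normalClosure (A : Set H) = N := by
  have := hN.normal
  exact hN.eq_of_le inferInstance (Subgroup.normalClosure_le_normal hAN)
    (ne_bot_of_le_ne_bot hA Subgroup.subset_normalClosure)

theorem isElementaryAbelian [Finite H] (hN : IsMinimalNormal N) [hcomm : IsMulCommutative N]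
    {p : ℕ} (hp : p.Prime) (hpN : p ∣ Nat.card N) : IsElementaryAbelian p N := by
  refine ⟨hN.ne_bot, hcomm, ?_⟩
  let powKer : Subgroup H := (powMonoidHom p : N →* N).ker.map N.subtype
  have hpow : powKer = N := by
    refine hN.eq_of_le ⟨?_⟩ (Subgroup.map_subtype_le _) fun hbot ↦ ?_
    · rintro _ ⟨v, hv, rfl⟩ g
      refine ⟨⟨g * v * g⁻¹, hN.normal.conj_mem v v.2 g⟩, Subtype.ext ?_, rfl⟩
      have hv : (v : H) ^ p = 1 := congrArg Subtype.val hv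
      simp [conj_pow, hv]
    · obtain ⟨x, hx, hxp⟩ := exists_mem_orderOf_eq N hp hpN
      have hx_mem : x ∈ powKer := by
        refine ⟨⟨x, hx⟩, Subtype.ext ?_, rfl⟩
        simp [← hxp, pow_orderOf_eq_one]
      rw [hbot, Subgroup.mem_bot] at hx_mem
      rw [hx_mem, orderOf_one] at hxp
      exact hp.one_lt.ne hxp
  intro v
  obtain ⟨w, hw, hwv⟩ := hpow.ge v.2
  rwa [← Subtype.ext hwv]

theorem map_eq_or_commute [Finite H] (hN : IsMinimalNormal N) (α : MulAut H) :
    N.map α.toMonoidHom = N ∨ ∀ a ∈ N, ∀ b ∈ N, Commute a (α b) := by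
  have := hN.normal
  have map_normal : (N.map α.toMonoidHom).Normal := hN.normal.map _ α.surjective
  rcases hN.disjoint_or_le map_normal with hdisj | hle
  · exact .inr fun a ha b hb ↦ (commute_of_disjoint_of_normal map_normal hN.normal hdisj
      (Subgroup.mem_map_of_mem _ hb) ha).symm
  · refine .inl (Subgroup.eq_of_le_of_card_ge hle ?_).symm
    exact Nat.le_of_dvd Nat.card_pos (Subgroup.card_map_dvd _ _)

end IsMinimalNormal

end MinimalNormal

section SimpleComponent

variable {H : Type*} [Group H]

/-- Every conjugate of `A` either equals `A` or centralises `A`. -/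
def IsConjSeparated (A : Subgroup H) : Prop :=
  ∀ g : H, g ∈ Subgroup.normalizer (A : Set H) ∨ ∀ a ∈ A, ∀ b ∈ A, Commute a (g * b * g⁻¹)

/-- A simple subgroup `A` of `N` all of whose conjugates in `H` equal or centralise `A`; a minimal
normal subgroup `N` is then a central product of the conjugates of `A`. -/
structure IsSimpleComponent (N A : Subgroup H) : Prop where
  le : A ≤ N
  isSimpleGroup : IsSimpleGroup A
  isConjSeparated : IsConjSeparated A

theorem IsConjSeparated.map_subtype [Finite H] {A : Subgroup H} (hA : IsConjSeparated A)
    {B : Subgroup A} (hB : IsMinimalNormal B) : IsConjSeparated (B.map A.subtype) := by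
  intro g
  rcases hA g with hg | hg
  · rcases hB.map_eq_or_commute (A.normalizerMonoidHom ⟨g, hg⟩) with hmap | hcomm
    · left
      rw [Subgroup.mem_normalizer_iff_map_conj_eq, Subgroup.map_map]
      nth_rewrite 2 [← hmap]
      rw [Subgroup.map_map]
      rfl
    · right
      rintro _ ⟨a, ha, rfl⟩ _ ⟨b, hb, rfl⟩
      exact (hcomm a ha b hb).map A.subtype
  · right
    rintro _ ⟨a, -, rfl⟩ _ ⟨b, -, rfl⟩
    exact hg a a.2 b b.2

theorem exists_isSimpleComponent [Finite H] {N : Subgroup H} (hN : N.Normal) (hne : N ≠ ⊥) :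
    ∃ A, IsSimpleComponent N A := by
  obtain ⟨A, hA⟩ :=
    (Set.toFinite {A : Subgroup H | A ≠ ⊥ ∧ A ≤ N ∧ IsConjSeparated A}).exists_minimal
      ⟨N, hne, le_rfl, fun g ↦ .inl (Subgroup.normalizer_eq_top (H := N) ▸ Subgroup.mem_top g)⟩
  obtain ⟨hA_ne, hAN, hA_sep⟩ := hA.prop
  have : Nontrivial A := (Subgroup.nontrivial_iff_ne_bot A).2 hA_ne
  refine ⟨A, hAN, ⟨fun C hC ↦ or_iff_not_imp_left.2 fun hC_ne ↦ ?_⟩, hA_sep⟩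
  obtain ⟨B, hBC, hB⟩ := exists_isMinimalNormal_le hC hC_ne
  have hB_ne : B.map A.subtype ≠ ⊥ := by
    rw [Ne, Subgroup.map_eq_bot_iff_of_injective _ A.subtype_injective]
    exact hB.ne_bot
  have hAB : A ≤ B.map A.subtype := hA.le_of_le
    ⟨hB_ne, (Subgroup.map_subtype_le B).trans hAN, hA_sep.map_subtype hB⟩
    (Subgroup.map_subtype_le B)
  refine eq_top_iff.2 fun a _ ↦ hBC ?_
  obtain ⟨b, hb, hba⟩ := hAB a.2
  rwa [← Subtype.ext hba]

theorem IsConjSeparated.normalClosure_le {A : Subgroup H} (hA : IsConjSeparated A) :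
    Subgroup.normalClosure (A : Set H) ≤ A ⊔ Subgroup.centralizer (A : Set H) := by
  rw [Subgroup.normalClosure, Subgroup.closure_le]
  intro y hy
  obtain ⟨a, ha, hay⟩ := Group.mem_conjugatesOfSet_iff.1 hy
  obtain ⟨g, rfl⟩ := isConj_iff.1 hay
  rcases hA g with hg | hg
  · exact Subgroup.mem_sup_left ((Subgroup.mem_normalizer_iff.1 hg a).1 ha)
  · exact Subgroup.mem_sup_right (Subgroup.mem_centralizer_iff.2 fun b hb ↦ hg b hb a ha)

theorem IsConjSeparated.exists_eq_mul {A : Subgroup H} (hA : IsConjSeparated A) {y : H}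
    (hy : y ∈ Subgroup.normalClosure (A : Set H)) :
    ∃ a ∈ A, ∃ c ∈ Subgroup.centralizer (A : Set H), a * c = y := by
  have hy := SetLike.mem_coe.2 (hA.normalClosure_le hy)
  rwa [Subgroup.coe_mul_of_right_le_normalizer_left _ _
    (Subgroup.centralizer_le_normalizer _)] at hy

namespace IsSimpleComponent

variable {N A : Subgroup H}

theorem ne_bot (hA : IsSimpleComponent N A) : A ≠ ⊥ :=
  (Subgroup.nontrivial_iff_ne_bot A).1 hA.isSimpleGroup.toNontrivial

theorem isMulCommutative (hA : IsSimpleComponent N A) (hN : IsMinimalNormal N)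
    [IsMulCommutative A] : IsMulCommutative N := by
  have := hN.normal
  have normalClosure_eq := hN.normalClosure_eq hA.le hA.ne_bot
  have le_centralizer_A : N ≤ Subgroup.centralizer (A : Set H) := by
    refine normalClosure_eq.ge.trans (hA.isConjSeparated.normalClosure_le.trans ?_)
    exact sup_le A.le_centralizer le_rfl
  have le_centralizer_N : A ≤ Subgroup.centralizer (N : Set H) :=
    Subgroup.le_centralizer_iff.1 le_centralizer_A
  rw [← Subgroup.le_centralizer_iff_isMulCommutative]
  nth_rewrite 1 [← normalClosure_eq]
  exact Subgroup.normalClosure_le_normal le_centralizer_N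

theorem mem_centralizer_of_coprime (hA : IsSimpleComponent N A) (hN : IsMinimalNormal N) {y : H}
    (hy : y ∈ N) (hcop : (Nat.card A).Coprime (orderOf y)) :
    y ∈ Subgroup.centralizer (A : Set H) := by
  rw [← hN.normalClosure_eq hA.le hA.ne_bot] at hy
  obtain ⟨a, ha, c, hc, rfl⟩ := hA.isConjSeparated.exists_eq_mul hy
  obtain ⟨n, hn⟩ := exists_pow_eq_self_of_coprime hcop
  have hac : Commute a c := Subgroup.mem_centralizer_iff.1 hc a ha
  have ha_pow : a ^ Nat.card A = 1 :=
    orderOf_dvd_iff_pow_eq_one.1 (orderOf_dvd_natCard_of_mem ha)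
  rw [← hn, hac.mul_pow, ha_pow, one_mul]
  exact pow_mem (pow_mem hc _) _

theorem dvd_card [Finite H] (hA : IsSimpleComponent N A) (hN : IsMinimalNormal N)
    (hcomm : ¬ IsMulCommutative N) {p : ℕ} (hp : p.Prime) (hpN : p ∣ Nat.card N) :
    p ∣ Nat.card A := by
  by_contra hpA
  obtain ⟨x, hx, hxp⟩ := exists_mem_orderOf_eq N hp hpN
  have := hN.normal
  have conj_mem_centralizer (g : H) : g * x * g⁻¹ ∈ Subgroup.centralizer (A : Set H) := by
    refine hA.mem_centralizer_of_coprime hN (hN.normal.conj_mem x hx g) ?_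
    rw [← MulAut.conj_apply, MulEquiv.orderOf_eq, hxp]
    exact (hp.coprime_iff_not_dvd.2 hpA).symm
  have normalClosure_eq : Subgroup.normalClosure {x} = N := by
    refine hN.eq_of_le inferInstance (Subgroup.normalClosure_le_normal (by simpa)) fun hbot ↦ ?_
    have hx1 : x ∈ (⊥ : Subgroup H) := hbot ▸ Subgroup.subset_normalClosure rfl
    rw [Subgroup.mem_bot.1 hx1, orderOf_one] at hxp
    exact hp.one_lt.ne hxp
  have hNA : N ≤ Subgroup.centralizer (A : Set H) := by
    rw [← normalClosure_eq, Subgroup.normalClosure, Subgroup.closure_le]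
    intro y hy
    obtain ⟨_, rfl, hxy⟩ := Group.mem_conjugatesOfSet_iff.1 hy
    obtain ⟨g, rfl⟩ := isConj_iff.1 hxy
    exact conj_mem_centralizer g
  have : IsMulCommutative A := Subgroup.le_centralizer_iff_isMulCommutative.1 (hA.le.trans hNA)
  exact hcomm (hA.isMulCommutative hN)

end IsSimpleComponent

end SimpleComponent

section OrderSixty

variable {G : Type*} [Group G] [Finite G]

theorem card_quotient_normalCore_dvd (A : Subgroup G) :
    Nat.card (G ⧸ A.normalCore) ∣ (Nat.card G).gcd A.index.factorial := by
  refine Nat.dvd_gcd (Subgroup.index_dvd_card _) ?_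
  rw [A.normalCore_eq_ker, ← Subgroup.index, Subgroup.index_ker, Subgroup.index, ← Nat.card_perm]
  exact Subgroup.card_subgroup_dvd_card _

theorem exists_isSolvable_card_quotient_dvd {p n m : ℕ} (hp : p.Prime) (hm : ¬ p ∣ m)
    (hcard : Nat.card G = p ^ n * m) :
    ∃ K : Subgroup G, ∃ _ : K.Normal,
      Group.IsSolvable K ∧ Nat.card (G ⧸ K) ∣ (p ^ n * m).gcd m.factorial := by
  have : Fact p.Prime := ⟨hp⟩
  obtain ⟨P⟩ : Nonempty (Sylow p G) := inferInstance
  have : Group.IsNilpotent P := P.isPGroup'.isNilpotent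
  have card_P : Nat.card P = p ^ n := by
    have hm_ne : m ≠ 0 := by rintro rfl; exact hm (dvd_zero p)
    rw [P.card_eq_multiplicity, hcard, Nat.factorization_mul (pow_ne_zero n hp.ne_zero) hm_ne,
      Finsupp.add_apply, hp.factorization_pow, Finsupp.single_eq_same,
      Nat.factorization_eq_zero_of_not_dvd hm, add_zero]
  have index_P : (P : Subgroup G).index = m := by
    have := (P : Subgroup G).card_mul_index
    rw [hcard, card_P] at this
    exact Nat.eq_of_mul_eq_mul_left (pow_pos hp.pos n) this
  refine ⟨(P : Subgroup G).normalCore, inferInstance,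
    isSolvable_of_le (Subgroup.normalCore_le _) inferInstance, ?_⟩
  rw [← hcard, ← index_P]
  exact card_quotient_normalCore_dvd _

theorem isSolvable_of_squarefree_card (h : Squarefree (Nat.card G)) : Group.IsSolvable G :=
  have := IsZGroup.of_squarefree h
  inferInstance

theorem isSolvable_of_card_dvd_four (h : Nat.card G ∣ 4) : Group.IsSolvable G := by
  obtain ⟨k, -, hk⟩ := (Nat.dvd_prime_pow Nat.prime_two (m := 2)).1 h
  have : Fact (Nat.Prime 2) := ⟨Nat.prime_two⟩
  have := (IsPGroup.of_card hk).isNilpotent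
  infer_instance

theorem isSolvable_of_card_dvd_sixty (hdvd : Nat.card G ∣ 60) (hne : Nat.card G ≠ 60) :
    Group.IsSolvable G := by
  have hcases : Squarefree (Nat.card G) ∨ Nat.card G = 4 ∨ Nat.card G = 12 ∨ Nat.card G = 20 := by
    have : ∀ n ∈ Nat.divisors 60, n ≠ 60 → Squarefree n ∨ n = 4 ∨ n = 12 ∨ n = 20 := by
      decide +kernel
    exact this _ (by simpa using hdvd) hne
  rcases hcases with hcard | hcard | hcard | hcard
  · exact isSolvable_of_squarefree_card hcard
  · exact isSolvable_of_card_dvd_four hcard.dvd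
  · obtain ⟨K, hK, hK_solv, hcard_quot⟩ := exists_isSolvable_card_quotient_dvd (p := 2) (n := 2)
      (m := 3) Nat.prime_two (by norm_num) hcard
    refine (Group.isSolvable_iff_subgroup_quotient K).2 ⟨hK_solv, isSolvable_of_squarefree_card ?_⟩
    exact Squarefree.squarefree_of_dvd hcard_quot (by decide +kernel)
  · obtain ⟨K, hK, hK_solv, hcard_quot⟩ := exists_isSolvable_card_quotient_dvd (p := 5) (n := 1)
      (m := 4) Nat.prime_five (by norm_num) hcard
    exact (Group.isSolvable_iff_subgroup_quotient K).2
      ⟨hK_solv, isSolvable_of_card_dvd_four hcard_quot⟩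

theorem natCard_alternatingGroup_five : Nat.card (alternatingGroup (Fin 5)) = 60 := by
  rw [nat_card_alternatingGroup, Nat.card_fin]
  rfl

theorem not_isSolvable_alternatingGroup_five : ¬ Group.IsSolvable (alternatingGroup (Fin 5)) := by
  have : IsSimpleGroup (alternatingGroup (Fin 5)) := alternatingGroup.isSimpleGroup (by simp)
  rw [← IsSimpleGroup.comm_iff_isSolvable]
  decide +kernel

theorem eq_top_of_not_isSolvable (hG : Nat.card G = 60) {A : Subgroup G}
    (hA : ¬ Group.IsSolvable A) : A = ⊤ := by
  refine A.eq_top_of_card_eq ?_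
  rw [hG]
  exact not_ne_iff.1 fun hne ↦ hA (isSolvable_of_card_dvd_sixty
    (hG ▸ A.card_subgroup_dvd_card) hne)

end OrderSixty

theorem exists_surjective_of_ker_le {G Q S : Type*} [Group G] [Group Q] [Group S] {f : G →* Q}
    {g : G →* S} (hg : Function.Surjective g) (hker : f.ker ≤ g.ker) :
    ∃ h : f.range →* S, Function.Surjective h :=
  ⟨(QuotientGroup.lift f.ker g hker).comp (QuotientGroup.quotientKerEquivRange f).symm.toMonoidHom,
    (QuotientGroup.lift_surjective_of_surjective _ _ hg hker).comp
      (QuotientGroup.quotientKerEquivRange f).symm.surjective⟩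

theorem nonempty_mulEquiv_of_card_eq_sixty {G Q S : Type*} [Group G] [Group Q] [Group S]
    (hQ : Nat.card Q = 60) {f : G →* Q} {g : G →* S} (hg : Function.Surjective g)
    (hker : f.ker ≤ g.ker) (hS : ¬ Group.IsSolvable S) : Nonempty (S ≃* Q) := by
  have : Finite Q := Nat.finite_of_card_ne_zero (hQ.trans_ne (by norm_num))
  obtain ⟨h, h_surj⟩ := exists_surjective_of_ker_le hg hker
  have : Finite S := Finite.of_surjective h h_surj
  have range_f : f.range = ⊤ := eq_top_of_not_isSolvable hQ fun hsolv ↦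
    hS (Group.isSolvable_of_surjective h_surj)
  have card_range : Nat.card f.range = 60 := by rw [range_f, Subgroup.card_top, hQ]
  have card_S : Nat.card S = 60 := by
    by_contra hne
    exact hS (isSolvable_of_card_dvd_sixty
      (card_range ▸ Subgroup.card_dvd_of_surjective h h_surj) hne)
  let e : f.range ≃* S :=
    MulEquiv.ofBijective h (h_surj.bijective_of_nat_card_le (card_range.trans card_S.symm).le)
  exact ⟨e.symm.trans ((MulEquiv.subgroupCongr range_f).trans Subgroup.topEquiv)⟩

namespace IsPseudoSolvable

variable {G : Type*} [Group G]

theorem exists_factor (hG : IsPseudoSolvable G) {P : Subgroup G → Prop} (hbot : ¬ P ⊥)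
    (htop : P ⊤) :
    ∃ T K : Subgroup G, ∃ _ : (T.subgroupOf K).Normal, T ≤ K ∧ ¬ P T ∧ P K ∧
      (IsCyclic (K ⧸ T.subgroupOf K) ∨
        Nonempty (K ⧸ T.subgroupOf K ≃* alternatingGroup (Fin 5))) := by
  obtain ⟨n, S, h_zero, h_last, h_step⟩ := hG
  by_contra hcon
  have not_P (i : Fin (n + 1)) : ¬ P (S i) := by
    induction i using Fin.induction with
    | zero => rwa [h_zero]
    | succ i ih =>
      obtain ⟨hle, hnormal, hfactor⟩ := h_step i
      exact fun hP ↦ hcon ⟨S i.castSucc, S i.succ, hnormal, hle, ih, hP, hfactor⟩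
  exact not_P (Fin.last n) (h_last ▸ htop)

theorem exists_surjective_of_not_isSolvable (hG : IsPseudoSolvable G) {C : Subgroup G}
    (hC : ¬ Group.IsSolvable C) :
    ∃ Y ≤ C, ∃ f : Y →* alternatingGroup (Fin 5), Function.Surjective f := by
  obtain ⟨T, K, hT, hTK, hCT, hCK, hfactor⟩ := hG.exists_factor
    (P := fun K ↦ ¬ Group.IsSolvable (C ⊓ K : Subgroup G))
    (not_not.2 (isSolvable_of_le inf_le_right inferInstance)) (by rwa [inf_top_eq])
  rw [not_not] at hCT
  let π : (C ⊓ K : Subgroup G) →* K ⧸ T.subgroupOf K :=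
    (QuotientGroup.mk' _).comp (Subgroup.inclusion inf_le_right)
  have not_isSolvable_range : ¬ Group.IsSolvable π.range := fun hsolv ↦ hCK <| by
    refine Group.isSolvable_of_ker_le_range (Subgroup.inclusion (inf_le_inf_left C hTK))
      π.rangeRestrict ?_
    intro y hy
    rw [π.ker_rangeRestrict] at hy
    exact ⟨⟨y, y.2.1, (QuotientGroup.eq_one_iff (N := T.subgroupOf K) _).1 hy⟩, rfl⟩
  rcases hfactor with hcyclic | ⟨⟨e⟩⟩
  · have : Group.IsSolvable π.range := inferInstance
    exact absurd this not_isSolvable_range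
  · have : Finite (K ⧸ T.subgroupOf K) := Finite.of_equiv _ e.symm.toEquiv
    have π_surj : Function.Surjective π := MonoidHom.range_eq_top.1 <|
      eq_top_of_not_isSolvable
        ((Nat.card_congr e.toEquiv).trans natCard_alternatingGroup_five) not_isSolvable_range
    exact ⟨C ⊓ K, inf_le_left, e.toMonoidHom.comp π, e.surjective.comp π_surj⟩

theorem isSolvable_of_not_dvd (hG : IsPseudoSolvable G) {C : Subgroup G} {n : ℕ} (hn : n ∣ 60)
    (hC : ¬ n ∣ Nat.card C) : Group.IsSolvable C := by
  by_contra hsolv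
  obtain ⟨Y, hYC, f, hf⟩ := hG.exists_surjective_of_not_isSolvable hsolv
  refine hC (hn.trans ?_)
  rw [← natCard_alternatingGroup_five]
  exact (Subgroup.card_dvd_of_surjective f hf).trans (Subgroup.card_dvd_of_le hYC)

theorem nonempty_mulEquiv (hG : IsPseudoSolvable G) {Y : Subgroup G} {S : Type*} [Group S]
    [IsSimpleGroup S] (hS : ¬ Group.IsSolvable S) {g : Y →* S} (hg : Function.Surjective g) :
    Nonempty (S ≃* alternatingGroup (Fin 5)) := by
  obtain ⟨T, K, hT, -, hgT, hgK, hfactor⟩ := hG.exists_factor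
    (P := fun K ↦ (K.subgroupOf Y).map g = ⊤)
    (by rw [Subgroup.bot_subgroupOf, Subgroup.map_bot]; exact bot_ne_top)
    (by rw [Subgroup.top_subgroupOf, Subgroup.map_top_of_surjective g hg])
  let g_K : K.subgroupOf Y →* S := g.comp (K.subgroupOf Y).subtype
  have g_K_surj : Function.Surjective g_K := by
    rwa [← MonoidHom.range_eq_top, MonoidHom.range_comp, Subgroup.range_subtype]
  let π : K.subgroupOf Y →* K ⧸ T.subgroupOf K :=
    (QuotientGroup.mk' _).comp (Y.subtype.subgroupComap K)
  have hker : π.ker ≤ g_K.ker := by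
    rw [← Subgroup.map_eq_bot_iff]
    refine (IsSimpleGroup.eq_bot_or_eq_top_of_normal (π.ker.map g_K)
      (Subgroup.Normal.map inferInstance g_K g_K_surj)).resolve_right fun htop ↦ hgT ?_
    rw [eq_top_iff, ← htop]
    rintro _ ⟨y, hy, rfl⟩
    exact ⟨y, (QuotientGroup.eq_one_iff (N := T.subgroupOf K) _).1 hy, rfl⟩
  rcases hfactor with hcyclic | ⟨⟨e⟩⟩
  · obtain ⟨h, h_surj⟩ := exists_surjective_of_ker_le g_K_surj hker
    have : Group.IsSolvable π.range := inferInstance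
    exact absurd (Group.isSolvable_of_surjective h_surj) hS
  · obtain ⟨e_S⟩ := nonempty_mulEquiv_of_card_eq_sixty
      ((Nat.card_congr e.toEquiv).trans natCard_alternatingGroup_five) g_K_surj hker hS
    exact ⟨e_S.trans e⟩

theorem nonempty_mulEquiv_subgroup_quotient (hG : IsPseudoSolvable G) {L : Subgroup G} [L.Normal]
    {A : Subgroup (G ⧸ L)} [IsSimpleGroup A] (hA : ¬ Group.IsSolvable A) :
    Nonempty (A ≃* alternatingGroup (Fin 5)) :=
  hG.nonempty_mulEquiv hA
    ((QuotientGroup.mk' L).subgroupComap_surjective_of_surjective A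
      (QuotientGroup.mk'_surjective L))

end IsPseudoSolvable

section ConjSeparated

variable {G : Type*} [Group G] {A : Subgroup G} {t x : G}

theorem mul_pow_mul_inv_pow_mem {n : ℕ} (h : ∀ i < n, x ^ i * t * (x ^ i)⁻¹ ∈ A) :
    (t * x) ^ n * (x ^ n)⁻¹ ∈ A := by
  induction n with
  | zero => simp
  | succ n ih =>
    convert mul_mem (ih fun i hi ↦ h i (hi.trans n.lt_succ_self)) (h n n.lt_succ_self) using 1
    rw [pow_succ (t * x), pow_succ' x]
    group

theorem exists_mem_centralizer_mul_pow_eq {n : ℕ}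
    (h : ∀ i, i ≠ 0 → i < n → x ^ i * t * (x ^ i)⁻¹ ∈ Subgroup.centralizer (A : Set G))
    (hn : n ≠ 0) (hx : x ^ n = 1) :
    ∃ c ∈ Subgroup.centralizer (A : Set G), (t * x) ^ n = t * c := by
  obtain ⟨k, rfl⟩ := Nat.exists_eq_succ_of_ne_zero hn
  refine ⟨(x * t * x⁻¹ * x) ^ k * (x ^ k)⁻¹, mul_pow_mul_inv_pow_mem fun i hi ↦ ?_, ?_⟩
  · convert h (i + 1) i.succ_ne_zero (Nat.succ_lt_succ hi) using 1
    rw [pow_succ]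
    group
  · have hxk : (x ^ k)⁻¹ = x := by rw [inv_eq_iff_mul_eq_one, ← pow_succ, hx]
    have hsemi : SemiconjBy x (t * x) (x * t) := (mul_assoc x t x).symm
    rw [inv_mul_cancel_right, hxk, pow_succ', mul_assoc, (hsemi.pow_right k).eq]

theorem isMulCommutative_closure_conj {Z : Subgroup G} (h : ∀ z ∈ Z, Commute t (z * t * z⁻¹)) :
    IsMulCommutative (Subgroup.closure {s | ∃ z ∈ Z, z * t * z⁻¹ = s}) := by
  refine Subgroup.isMulCommutative_closure ?_
  rintro _ ⟨y, hy, rfl⟩ _ ⟨z, hz, rfl⟩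
  have := (Commute.conj_iff y).2 (h (y⁻¹ * z) (mul_mem (inv_mem hy) hz))
  convert this.eq using 1 <;> group

theorem pow_eq_one_of_mem_closure {s : Set G} [IsMulCommutative (Subgroup.closure s)] {n : ℕ}
    (h : ∀ x ∈ s, x ^ n = 1) {y : G} (hy : y ∈ Subgroup.closure s) : y ^ n = 1 := by
  have : Subgroup.closure s ≤ (powMonoidHom n : Subgroup.closure s →* _).ker.map
      (Subgroup.closure s).subtype := by
    rw [Subgroup.closure_le]
    exact fun x hx ↦ ⟨⟨x, Subgroup.subset_closure hx⟩, Subtype.ext (h x hx), rfl⟩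
  obtain ⟨z, hz, rfl⟩ := this hy
  exact congrArg Subtype.val hz

theorem exists_orderOf_eq_of_commute_conj {ℓ : ℕ} (hℓ : ℓ.Prime)
    (hx : IsOfFinOrder x) (ht : orderOf t = ℓ) (htA : t ∈ A)
    (hcomm : ∀ z ∈ Subgroup.zpowers x, z ≠ 1 → ∀ a ∈ A, Commute a (z * t * z⁻¹))
    (hcenter : t ∉ Subgroup.centralizer (A : Set G)) :
    ∃ u, orderOf u = ℓ ∧ Commute x u := by
  let conjugates := {s | ∃ z ∈ Subgroup.zpowers x, z * t * z⁻¹ = s}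
  have : IsMulCommutative (Subgroup.closure conjugates) :=
    isMulCommutative_closure_conj fun z hz ↦ by
    by_cases hz1 : z = 1
    · simp [hz1]
    · exact hcomm z hz hz1 t htA
  have u_mem : (t * x) ^ orderOf x ∈ Subgroup.closure conjugates := by
    have := mul_pow_mul_inv_pow_mem (A := Subgroup.closure conjugates) (t := t) (x := x)
      (n := orderOf x)
      fun i _ ↦ Subgroup.subset_closure ⟨x ^ i, Subgroup.npow_mem_zpowers x i, rfl⟩
    rwa [pow_orderOf_eq_one, inv_one, mul_one] at this
  have u_pow : ((t * x) ^ orderOf x) ^ ℓ = 1 := by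
    refine pow_eq_one_of_mem_closure ?_ u_mem
    rintro _ ⟨z, -, rfl⟩
    rw [conj_pow, ← ht, pow_orderOf_eq_one, mul_one, mul_inv_cancel]
  have u_ne_one : (t * x) ^ orderOf x ≠ 1 := fun hu ↦ by
    obtain ⟨c, hc, htc⟩ := exists_mem_centralizer_mul_pow_eq (A := A) (t := t) (x := x)
      (fun i hi hip ↦ Subgroup.mem_centralizer_iff.2 (hcomm _ (Subgroup.npow_mem_zpowers x i)
        (pow_ne_one_of_lt_orderOf hi hip))) hx.orderOf_pos.ne' (pow_orderOf_eq_one x)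
    rw [hu, eq_comm, mul_eq_one_iff_eq_inv] at htc
    exact hcenter (htc ▸ inv_mem hc)
  have comm_t : Commute t ((t * x) ^ orderOf x) := by
    have t_mem : t ∈ Subgroup.closure conjugates :=
      Subgroup.subset_closure ⟨1, one_mem _, by simp⟩
    exact setLike_mul_comm t_mem u_mem
  have comm_x : Commute x ((t * x) ^ orderOf x) := by
    have := comm_t.inv_left.mul_left (Commute.self_pow (t * x) (orderOf x))
    rwa [inv_mul_cancel_left] at this
  have : Fact ℓ.Prime := ⟨hℓ⟩
  exact ⟨_, orderOf_eq_prime u_pow u_ne_one, comm_x⟩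

end ConjSeparated

theorem exists_fixed_of_pow_eq_one {S : Type*} [Group S] [Finite S] {p n : ℕ} (hp : p.Prime)
    (hcard : ¬ p ∣ Nat.card {a : S // orderOf a = n}) {σ : MulAut S} (hσ : σ ^ p = 1) :
    ∃ a, orderOf a = n ∧ σ a = a := by
  have : Fact p.Prime := ⟨hp⟩
  have := Fintype.ofFinite {a : S // orderOf a = n}
  have hσ_perm : (MulAut.toPerm S σ) ^ p = 1 := by rw [← map_pow, hσ, map_one]
  let τ : Equiv.Perm {a : S // orderOf a = n} :=
    (MulAut.toPerm S σ).subtypePerm fun a ↦ by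
      change orderOf (σ a) = n ↔ orderOf a = n
      rw [MulEquiv.orderOf_eq]
  obtain ⟨a, ha⟩ := Equiv.Perm.exists_fixed_point_of_prime (σ := τ) (n := 1)
    (by rwa [← Nat.card_eq_fintype_card]) (by
      rw [pow_one, Equiv.Perm.subtypePerm_pow]
      ext a
      simp [hσ_perm])
  exact ⟨a, a.2, congrArg Subtype.val ha⟩

theorem prime_dvd_sixty_iff {ℓ : ℕ} (hℓ : ℓ.Prime) : ℓ ∣ 60 ↔ ℓ = 2 ∨ ℓ = 3 ∨ ℓ = 5 := by
  rw [show 60 = 2 * (2 * (3 * 5)) from rfl, hℓ.dvd_mul, hℓ.dvd_mul, hℓ.dvd_mul,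
    Nat.prime_dvd_prime_iff_eq hℓ Nat.prime_two, Nat.prime_dvd_prime_iff_eq hℓ Nat.prime_three,
    Nat.prime_dvd_prime_iff_eq hℓ Nat.prime_five, or_self_left]

/-- The counts are `15`, `20` and `24`. -/
theorem not_dvd_card_orderOf_eq_alternatingGroup_five {p ℓ : ℕ} (hp : p.Prime) (hp60 : ¬ p ∣ 60)
    (hℓ : ℓ.Prime) (hℓ60 : ℓ ∣ 60) :
    ¬ p ∣ Nat.card {a : alternatingGroup (Fin 5) // orderOf a = ℓ} := by
  suffices Nat.card {a : alternatingGroup (Fin 5) // orderOf a = ℓ} ∣ 60 ^ 2 from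
    fun h ↦ hp60 (hp.dvd_of_dvd_pow (h.trans this))
  have : Fact ℓ.Prime := ⟨hℓ⟩
  simp only [orderOf_eq_prime_iff]
  rw [Nat.card_eq_fintype_card, Fintype.card_subtype]
  rcases (prime_dvd_sixty_iff hℓ).1 hℓ60 with rfl | rfl | rfl <;> decide +kernel

section AlternatingFive

theorem exists_kleinFour_alternatingGroup_five :
    ∃ V : Subgroup (alternatingGroup (Fin 5)), IsPGroup 2 V ∧ V ≠ ⊥ ∧
      3 ∣ Nat.card (Subgroup.normalizer (V : Set (alternatingGroup (Fin 5)))) := by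
  let V : Subgroup (alternatingGroup (Fin 5)) :=
    { carrier := {g | g.1 4 = 4 ∧ g ^ 2 = 1}
      one_mem' := by simp
      mul_mem' {a b} := by
        revert a b
        simp only [Set.mem_ofPred_eq]
        decide +kernel
      inv_mem' {a} ha := by rwa [inv_eq_of_mul_eq_one_left ((sq a).symm.trans ha.2)] }
  refine ⟨V, fun v ↦ ⟨1, Subtype.ext v.2.2⟩, ?_, ?_⟩
  · have exists_ne_one : ∃ v : alternatingGroup (Fin 5), v.1 4 = 4 ∧ v ^ 2 = 1 ∧ v ≠ 1 := by
      decide +kernel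
    obtain ⟨v, hv4, hv2, hv1⟩ := exists_ne_one
    exact (Subgroup.ne_bot_iff_exists_ne_one).2
      ⟨⟨v, hv4, hv2⟩, fun h ↦ hv1 (congrArg Subtype.val h)⟩
  · have exists_order_three : ∃ x : alternatingGroup (Fin 5), (x ^ 3 = 1 ∧ x ≠ 1) ∧
        ∀ v : alternatingGroup (Fin 5), (v.1 4 = 4 ∧ v ^ 2 = 1) ↔
          ((x * v * x⁻¹).1 4 = 4 ∧ (x * v * x⁻¹) ^ 2 = 1) := by
      decide +kernel
    obtain ⟨x, hx, hxV⟩ := exists_order_three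
    rw [← orderOf_eq_prime hx.1 hx.2]
    exact orderOf_dvd_natCard_of_mem (Subgroup.mem_normalizer_iff.2 hxV)

theorem exists_isPGroup_normalizer_of_surjective {Y : Type*} [Group Y] [Finite Y]
    {f : Y →* alternatingGroup (Fin 5)} (hf : Function.Surjective f) :
    ∃ T : Subgroup Y, IsPGroup 2 T ∧ T.map f ≠ ⊥ ∧
      ∃ x ∈ Subgroup.normalizer (T : Set Y), orderOf x = 3 := by
  obtain ⟨V, hV, hV_ne, h3⟩ := exists_kleinFour_alternatingGroup_five
  let N := Subgroup.normalizer (V : Set (alternatingGroup (Fin 5)))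
  have : Fact (Nat.Prime 2) := ⟨Nat.prime_two⟩
  have hVN : IsPGroup 2 (V.subgroupOf N) :=
    hV.of_equiv (Subgroup.subgroupOfEquivOfLe Subgroup.le_normalizer).symm
  have three_dvd_index : 3 ∣ (V.subgroupOf N).index := by
    rw [← (V.subgroupOf N).index_mul_card, Nat.prime_three.dvd_mul] at h3
    refine h3.resolve_right fun h ↦ ?_
    obtain ⟨n, hn⟩ := hVN.exists_card_eq
    rw [hn] at h
    exact absurd (Nat.prime_three.dvd_of_dvd_pow h) (by decide)
  obtain ⟨B, hB, hBV, hx⟩ := exists_isPGroup_map_eq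
    (f.subgroupComap_surjective_of_surjective N hf) Nat.prime_two hVN
  obtain ⟨x, hxB, hx3⟩ := hx 3 Nat.prime_three three_dvd_index
  refine ⟨B.map (N.comap f).subtype, hB.map _, ?_, x, ?_, by rwa [Subgroup.orderOf_coe]⟩
  · rwa [Subgroup.map_map, show f.comp (N.comap f).subtype = N.subtype.comp (f.subgroupComap N)
      from rfl, ← Subgroup.map_map, hBV, Subgroup.map_subgroupOf_eq_of_le Subgroup.le_normalizer]
  · exact Subgroup.le_normalizer_map _ ⟨x, hxB, rfl⟩

theorem IsConjSeparated.exists_orderOf_eq_mul {G : Type*} [Group G] [Finite G] {A : Subgroup G}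
    (hA : IsConjSeparated A) (e : A ≃* alternatingGroup (Fin 5)) {p ℓ : ℕ} (hp : p.Prime)
    (hp60 : ¬ p ∣ 60) (hpG : p ∣ Nat.card G) (hℓ : ℓ.Prime) (hℓ60 : ℓ ∣ 60) :
    ∃ g : G, orderOf g = p * ℓ := by
  have hpℓ : p ≠ ℓ := fun h ↦ hp60 (h ▸ hℓ60)
  obtain ⟨x, -, hx⟩ := exists_mem_orderOf_eq (⊤ : Subgroup G) hp (by rwa [Subgroup.card_top])
  suffices ∃ t, orderOf t = ℓ ∧ Commute x t by
    obtain ⟨t, ht, hxt⟩ := this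
    exact exists_orderOf_eq_mul_of_commute hp hℓ hpℓ hx ht hxt
  by_cases hxA : x ∈ Subgroup.normalizer (A : Set G)
  · have hσ : A.normalizerMonoidHom ⟨x, hxA⟩ ^ p = 1 := by
      rw [← map_pow, show (⟨x, hxA⟩ : Subgroup.normalizer (A : Set G)) ^ p = 1 from
        Subtype.ext (by simp [← hx, pow_orderOf_eq_one]), map_one]
    have hcard : ¬ p ∣ Nat.card {a : A // orderOf a = ℓ} := by
      rw [Nat.card_congr (e.toEquiv.subtypeEquiv (q := fun a ↦ orderOf a = ℓ)
        fun a ↦ by rw [MulEquiv.toEquiv_eq_coe, MulEquiv.coe_toEquiv, MulEquiv.orderOf_eq])]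
      exact not_dvd_card_orderOf_eq_alternatingGroup_five hp hp60 hℓ hℓ60
    obtain ⟨a, ha, hfix⟩ := exists_fixed_of_pow_eq_one hp hcard hσ
    exact ⟨a, by rwa [Subgroup.orderOf_coe],
      mul_inv_eq_iff_eq_mul.1 (congrArg Subtype.val hfix)⟩
  · have hcardA : Nat.card A = 60 := (Nat.card_congr e.toEquiv).trans natCard_alternatingGroup_five
    obtain ⟨t, htA, ht⟩ := exists_mem_orderOf_eq A hℓ (hcardA ▸ hℓ60)
    refine exists_orderOf_eq_of_commute_conj hℓ (isOfFinOrder_of_finite x) ht htA ?_ ?_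
    · exact fun z hz hz1 a ha ↦ (hA z).resolve_left (fun hzA ↦ hxA <|
        Subgroup.zpowers_le.2 hzA (mem_zpowers_of_mem_zpowers (hx ▸ hp) hz hz1)) a ha t htA
    · have center_trivial : ∀ a : alternatingGroup (Fin 5), (∀ b, b * a = a * b) → a = 1 := by
        decide +kernel
      intro hcent
      have het : e ⟨t, htA⟩ = 1 := center_trivial _ fun b ↦ by
        obtain ⟨b, rfl⟩ := e.surjective b
        rw [← map_mul, ← map_mul]
        exact congrArg e (Subtype.ext (Subgroup.mem_centralizer_iff.1 hcent b b.2))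
      rw [map_eq_one_iff e e.injective, Subgroup.mk_eq_one] at het
      rw [het, orderOf_one] at ht
      exact hℓ.one_lt.ne ht

end AlternatingFive

theorem IsPseudoSolvable.exists_isPGroup_normalizer {G : Type*} [Group G] [Finite G]
    (hG : IsPseudoSolvable G) (hns : ¬ Group.IsSolvable G) :
    ∃ T : Subgroup G, IsPGroup 2 T ∧ (∃ x ∈ Subgroup.normalizer (T : Set G), orderOf x = 3) ∧
      ∀ D : Subgroup G, D.Normal → T ≤ D → ¬ Group.IsSolvable D := by
  obtain ⟨Y, -, f, hf⟩ := hG.exists_surjective_of_not_isSolvable (C := ⊤)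
    (mt isSolvable_top_iff.1 hns)
  obtain ⟨T, hT, hT_ne, x, hxT, hx⟩ := exists_isPGroup_normalizer_of_surjective hf
  refine ⟨T.map Y.subtype, hT.map _, ⟨x, Subgroup.le_normalizer_map _ ⟨x, hxT, rfl⟩, by
    rwa [Subgroup.orderOf_coe]⟩, fun D hD hTD hsolv ↦ ?_⟩
  have map_isSolvable : Group.IsSolvable ((D.subgroupOf Y).map f) :=
    isSolvable_map f (isSolvable_comap (f := Y.subtype) (by
      rw [Y.ker_subtype]; infer_instance) hsolv)
  have map_normal := (hD.subgroupOf Y).map f hf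
  have : IsSimpleGroup (alternatingGroup (Fin 5)) := alternatingGroup.isSimpleGroup (by simp)
  rcases IsSimpleGroup.eq_bot_or_eq_top_of_normal _ map_normal with hbot | htop
  · exact hT_ne (eq_bot_mono (Subgroup.map_mono (Subgroup.map_le_iff_le_comap.1 hTD)) hbot)
  · refine not_isSolvable_alternatingGroup_five ?_
    rw [htop] at map_isSolvable
    exact isSolvable_top_iff.1 map_isSolvable

section ComplementAdj

variable {G : Type*} [Group G] {p q : ℕ}

/-- Adjacency in the complement of the prime graph of `G`. -/
structure ComplementAdj (G : Type*) [Group G] (p q : ℕ) : Prop where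
  prime_left : p.Prime
  prime_right : q.Prime
  ne : p ≠ q
  dvd_left : p ∣ Nat.card G
  dvd_right : q ∣ Nat.card G
  not_exists : ¬ ∃ g : G, orderOf g = p * q

namespace ComplementAdj

theorem symm (h : ComplementAdj G p q) : ComplementAdj G q p :=
  ⟨h.prime_right, h.prime_left, h.ne.symm, h.dvd_right, h.dvd_left,
    by simpa only [mul_comm q p] using h.not_exists⟩

theorem eq_one_of_commute [Finite G] (h : ComplementAdj G p q) {H : Type*} [Group H]
    {f : G →* H} (hf : Function.Surjective f) {b x : H} {k : ℕ} (hb : b ^ p ^ k = 1)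
    (hx : orderOf x = q) (hbx : Commute b x) : b = 1 := by
  obtain ⟨j, -, hj⟩ := (Nat.dvd_prime_pow h.prime_left).1 (orderOf_dvd_of_pow_eq_one hb)
  rcases j with _ | j
  · rwa [pow_zero, orderOf_eq_one_iff] at hj
  have hbp : orderOf (b ^ p ^ j) = p := by
    rw [orderOf_pow_of_dvd (pow_ne_zero j h.prime_left.ne_zero) (hj ▸ pow_dvd_pow p j.le_succ), hj,
      pow_succ, Nat.mul_div_cancel_left _ (pow_pos h.prime_left.pos j)]
  obtain ⟨y, hy⟩ := exists_orderOf_eq_mul_of_commute h.prime_left h.prime_right h.ne hbp hx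
    (hbx.pow_left _)
  obtain ⟨g, hg⟩ := exists_orderOf_eq_of_surjective hf y
  exact (h.not_exists ⟨g, hg.trans hy⟩).elim

end ComplementAdj

end ComplementAdj

section SectionAction

variable {G : Type*} [Group G] {L : Subgroup G} [L.Normal]

/-- The conjugation action of `G` on a normal subgroup `V` of a quotient `G ⧸ L`. -/
def sectionAction (V : Subgroup (G ⧸ L)) [V.Normal] : G →* MulAut V :=
  MulAut.conjNormal.comp (QuotientGroup.mk' L)

theorem sectionAction_apply_eq_iff {V : Subgroup (G ⧸ L)} [V.Normal] {g : G} {v : V} :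
    sectionAction V g v = v ↔ Commute (g : G ⧸ L) v := by
  rw [Subtype.ext_iff, commute_iff_eq, ← mul_inv_eq_iff_eq_mul]
  rfl

theorem mem_ker_sectionAction {V : Subgroup (G ⧸ L)} [V.Normal] {g : G} :
    g ∈ (sectionAction V).ker ↔ ∀ v ∈ V, Commute (g : G ⧸ L) v := by
  simp only [MonoidHom.mem_ker, MulEquiv.ext_iff, MulAut.one_apply, sectionAction_apply_eq_iff,
    Subtype.forall]

theorem comap_le_ker_sectionAction {K : Subgroup G} [K.Normal] {V : Subgroup (G ⧸ L)}
    {W : Subgroup (G ⧸ K)} (hW : W.Normal) (hV : V.Normal)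
    (h : Disjoint ((V.comap (QuotientGroup.mk' L)).map (QuotientGroup.mk' K)) W) :
    V.comap (QuotientGroup.mk' L) ≤ (sectionAction W).ker := fun _ hg ↦
  mem_ker_sectionAction.2 fun _ hw ↦ commute_of_disjoint_of_normal
    ((hV.comap _).map _ (QuotientGroup.mk'_surjective K)) hW h (Subgroup.mem_map_of_mem _ hg) hw

end SectionAction

namespace IsElementaryAbelian

variable {H : Type*} [Group H] {p n : ℕ} {V : Subgroup H}

theorem isPGroup (hV : IsElementaryAbelian p V) : IsPGroup p V :=
  fun v ↦ ⟨1, by rw [pow_one, hV.pow_eq_one]⟩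

theorem nontrivial (hV : IsElementaryAbelian p V) : Nontrivial V :=
  V.nontrivial_iff_ne_bot.2 hV.ne_bot

theorem isSolvable (hV : IsElementaryAbelian p V) : Group.IsSolvable V :=
  Group.isSolvable_of_comm hV.isMulCommutative.is_comm.comm

theorem dvd_card (hV : IsElementaryAbelian p V) (hp : p.Prime) : p ∣ Nat.card V := by
  have := hV.nontrivial
  obtain ⟨v, hv⟩ := exists_ne (1 : V)
  have : Fact p.Prime := ⟨hp⟩
  rw [← orderOf_eq_prime (hV.pow_eq_one v) hv]
  exact orderOf_dvd_natCard v

theorem not_dvd_card [Finite H] (hV : IsElementaryAbelian p V) (hp : p.Prime) (hn : n.Prime)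
    (hpn : p ≠ n) : ¬ n ∣ Nat.card V := by
  intro h
  have : Fact p.Prime := ⟨hp⟩
  obtain ⟨k, hk⟩ := hV.isPGroup.exists_card_eq
  exact hpn ((Nat.prime_dvd_prime_iff_eq hn hp).1 (hn.dvd_of_dvd_pow (hk ▸ h))).symm

theorem eq_one_of_pow_eq_one (hV : IsElementaryAbelian p V) (hp : p.Prime) (hn : ¬ p ∣ n) {v : V}
    (hv : v ^ n = 1) : v = 1 :=
  eq_one_of_pow_eq_one_of_prime hp hn (hV.pow_eq_one v) hv

variable {G : Type*} [Group G] [Finite G] {L : Subgroup G} [L.Normal] {V : Subgroup (G ⧸ L)}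
  [V.Normal] {r : ℕ}

theorem fixedPointFree_sectionAction (hV : IsElementaryAbelian p V) (h : ComplementAdj G p r)
    (hrL : ¬ r ∣ Nat.card L) {x : G} (hx : orderOf x = r) :
    MonoidHom.FixedPointFree (sectionAction V x) := by
  intro v hv
  refine Subtype.ext (h.eq_one_of_commute (QuotientGroup.mk'_surjective L) (k := 1) ?_
    (orderOf_mk_eq_of_not_dvd_card h.prime_right hrL hx) (sectionAction_apply_eq_iff.1 hv).symm)
  rw [pow_one]
  exact congrArg Subtype.val (hV.pow_eq_one v)

theorem not_dvd_card_ker_sectionAction (hV : IsElementaryAbelian p V) (h : ComplementAdj G p r)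
    (hrL : ¬ r ∣ Nat.card L) : ¬ r ∣ Nat.card (sectionAction V).ker := by
  intro hr
  obtain ⟨x, hx_ker, hx⟩ := exists_mem_orderOf_eq _ h.prime_right hr
  have := hV.nontrivial
  obtain ⟨v, hv⟩ := exists_ne (1 : V)
  exact hv (hV.fixedPointFree_sectionAction h hrL hx v (by rw [MonoidHom.mem_ker.1 hx_ker]; rfl))

/-- The Frobenius group `B ⋊ ⟨x⟩` would otherwise act on `V` with `x` fixed-point-free. -/
theorem le_ker_sectionAction (hV : IsElementaryAbelian p V) {q : ℕ} (hpr : ComplementAdj G p r)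
    (hqr : ComplementAdj G q r) (hpq : p ≠ q) (hrL : ¬ r ∣ Nat.card L) {B : Subgroup G}
    (hB : IsPGroup q B) {x : G} (hxB : x ∈ Subgroup.normalizer (B : Set G)) (hx : orderOf x = r) :
    B ≤ (sectionAction V).ker := by
  have := hV.isMulCommutative
  have : Fact q.Prime := ⟨hqr.prime_left⟩
  obtain ⟨k, hk⟩ := hB.exists_card_eq
  refine le_ker_of_frobenius hpr.prime_right (hx ▸ pow_orderOf_eq_one x) hxB ?_
    (hV.fixedPointFree_sectionAction hpr hrL hx) fun v hv ↦ ?_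
  · intro b hb hbx
    obtain ⟨j, hj⟩ := hB ⟨b, hb⟩
    exact hqr.eq_one_of_commute (f := MonoidHom.id G) Function.surjective_id
      (congrArg Subtype.val hj) hx hbx
  · refine hV.eq_one_of_pow_eq_one hpr.prime_left (fun h ↦ hpq ?_) hv
    exact (Nat.prime_dvd_prime_iff_eq hpr.prime_left hqr.prime_left).1
      (hpr.prime_left.dvd_of_dvd_pow (hk ▸ h))

end IsElementaryAbelian

section FrobeniusArrow

/-- `p → q`: a quotient of `G` by a normal subgroup of order prime to `p q` has an elementary
abelian normal `p`-subgroup `V`. As `G` has no element of order `p q`, the elements of order `q` act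
on `V` without fixed points. -/
structure FrobeniusArrow (G : Type*) [Group G] (p q : ℕ) : Prop extends ComplementAdj G p q where
  exists_section : ∃ (L : Subgroup G) (_ : L.Normal) (V : Subgroup (G ⧸ L)), V.Normal ∧
    IsElementaryAbelian p V ∧ ¬ p ∣ Nat.card L ∧ ¬ q ∣ Nat.card L

variable {G : Type*} [Group G] [Finite G] {p q r s : ℕ}

theorem exists_mulEquiv_of_not_dvd_card {L : Subgroup G} [L.Normal] {W : Subgroup (G ⧸ L)}
    [W.Normal] (hq : q.Prime) (hW : IsPGroup q W) (hqL : ¬ q ∣ Nat.card L) :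
    ∃ B : Subgroup G, Nonempty (B ≃* W) ∧
      ∀ r, r.Prime → r ∣ W.index → ∃ x ∈ Subgroup.normalizer (B : Set G), orderOf x = r := by
  obtain ⟨B, hB, rfl, hx⟩ := exists_isPGroup_map_eq (QuotientGroup.mk'_surjective L) hq hW
  have : Fact q.Prime := ⟨hq⟩
  obtain ⟨k, hk⟩ := hB.exists_card_eq
  have hdisj : Disjoint B L := Subgroup.disjoint_of_coprime_natCard
    (hk ▸ (hq.coprime_iff_not_dvd.2 hqL).pow_left k)
  refine ⟨B, ⟨MulEquiv.ofBijective ((QuotientGroup.mk' L).subgroupMap B)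
    ⟨(injective_iff_map_eq_one _).2 fun b hb ↦ Subtype.ext ?_,
      (QuotientGroup.mk' L).subgroupMap_surjective B⟩⟩, hx⟩
  exact Subgroup.disjoint_def.1 hdisj b.2
    ((QuotientGroup.eq_one_iff (b : G)).1 (congrArg Subtype.val hb))

theorem IsElementaryAbelian.dvd_index {L : Subgroup G} [L.Normal] {W : Subgroup (G ⧸ L)}
    (hW : IsElementaryAbelian q W) (h : ComplementAdj G q r) (hrL : ¬ r ∣ Nat.card L) :
    r ∣ W.index := by
  have hr := h.dvd_right
  rw [L.card_eq_card_quotient_mul_card_subgroup, ← W.index_mul_card, h.prime_right.dvd_mul,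
    h.prime_right.dvd_mul] at hr
  exact (hr.resolve_right hrL).resolve_right (hW.not_dvd_card h.prime_left h.prime_right h.ne)

namespace FrobeniusArrow

theorem isCyclic (h : FrobeniusArrow G p q) {E : Subgroup G} (hE : IsMulCommutative E)
    (hEq : ∀ e : E, e ^ q = 1) : IsCyclic E := by
  obtain ⟨L, _, V, _, hV, -, hqL⟩ := h.exists_section
  have := hV.isMulCommutative
  have := hV.nontrivial
  have : Fact q.Prime := ⟨h.prime_right⟩
  refine isCyclic_of_forall_fixedPointFree (ψ := (sectionAction V).comp E.subtype) h.prime_right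
    hEq (fun e he ↦ ?_) fun v hv ↦ ?_
  · exact hV.fixedPointFree_sectionAction h.toComplementAdj hqL
      ((Subgroup.orderOf_coe e).trans (orderOf_eq_prime (hEq e) he))
  · exact hV.eq_one_of_pow_eq_one h.prime_left
      (mt (Nat.prime_dvd_prime_iff_eq h.prime_left h.prime_right).1 h.ne) hv

theorem not_dvd_card_commutator (hpq : FrobeniusArrow G p q) (hqr : FrobeniusArrow G q r) :
    ¬ r ∣ Nat.card (commutator G) := by
  obtain ⟨L, _, W, _, hW, hqL, hrL⟩ := hqr.exists_section
  obtain ⟨B, ⟨e⟩, -⟩ := exists_mulEquiv_of_not_dvd_card hqr.prime_left hW.isPGroup hqL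
  have := hW.isMulCommutative
  have hB : IsMulCommutative B := ⟨⟨fun a b ↦ e.injective (by
    rw [map_mul, map_mul, mul_comm])⟩⟩
  have hBq (b : B) : b ^ q = 1 := e.injective (by rw [map_pow, hW.pow_eq_one, map_one])
  have := hpq.isCyclic hB hBq
  have : IsCyclic W := isCyclic_of_surjective e e.surjective
  let _ : CommGroup (MulAut W) :=
    (IsCyclic.mulAutMulEquiv W).toMonoidHom.commGroupOfInjective
      (IsCyclic.mulAutMulEquiv W).injective
  intro hr
  exact hW.not_dvd_card_ker_sectionAction hqr.toComplementAdj hrL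
    (hr.trans (Subgroup.card_dvd_of_le (Abelianization.commutator_subset_ker (sectionAction W))))

/-- Otherwise `V` meets the commutator subgroup trivially, so it is central. -/
theorem dvd_card_commutator (h : FrobeniusArrow G p q) : p ∣ Nat.card (commutator G) := by
  obtain ⟨L, _, V, hV_normal, hV, -, hqL⟩ := h.exists_section
  by_contra hp
  have ker_eq_top : (sectionAction V).ker = ⊤ := by
    refine (Subgroup.eq_top_iff' _).2 fun g ↦ mem_ker_sectionAction.2 fun v hv ↦ ?_
    obtain ⟨u, rfl⟩ := QuotientGroup.mk_surjective v
    have comm_mem : ⁅(g : G ⧸ L), (u : G ⧸ L)⁆ ∈ V :=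
      mul_mem (hV_normal.conj_mem _ hv g) (inv_mem hv)
    have comm_pow_p : ⁅(g : G ⧸ L), (u : G ⧸ L)⁆ ^ p = 1 :=
      congrArg Subtype.val (hV.pow_eq_one ⟨_, comm_mem⟩)
    have comm_pow_card : ⁅(g : G ⧸ L), (u : G ⧸ L)⁆ ^ Nat.card (commutator G) = 1 := by
      have hgu : ⁅g, u⁆ ∈ commutator G :=
        Subgroup.commutator_mem_commutator (Subgroup.mem_top g) (Subgroup.mem_top u)
      exact congrArg (QuotientGroup.mk' L)
        (orderOf_dvd_iff_pow_eq_one.1 (orderOf_dvd_natCard_of_mem hgu))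
    exact commutatorElement_eq_one_iff_commute.1
      (eq_one_of_pow_eq_one_of_prime h.prime_left hp comm_pow_p comm_pow_card)
  refine hV.not_dvd_card_ker_sectionAction h.toComplementAdj hqL ?_
  rw [ker_eq_top, Subgroup.card_top]
  exact h.dvd_right

theorem not_chain (hpq : FrobeniusArrow G p q) (hqr : FrobeniusArrow G q r)
    (hrs : FrobeniusArrow G r s) : False :=
  hpq.not_dvd_card_commutator hqr hrs.dvd_card_commutator

theorem exists_orderOf_eq_mul (hpq : FrobeniusArrow G p q) (hqr : FrobeniusArrow G q r)
    (hpr : p ≠ r) : ∃ g : G, orderOf g = p * r := by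
  by_contra hno
  have adj : ComplementAdj G p r :=
    ⟨hpq.prime_left, hqr.prime_right, hpr, hpq.dvd_left, hqr.dvd_right, hno⟩
  obtain ⟨L, _, V, hV_normal, hV, -, hqL⟩ := hpq.exists_section
  obtain ⟨K, _, W, hW_normal, hW, hqK, hrK⟩ := hqr.exists_section
  have hq_comap : ¬ q ∣ Nat.card (V.comap (QuotientGroup.mk' L)) := by
    rw [card_comap_mk', hqr.prime_left.dvd_mul, not_or]
    exact ⟨hqL, hV.not_dvd_card hpq.prime_left hpq.prime_right hpq.ne⟩
  have : Fact q.Prime := ⟨hqr.prime_left⟩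
  obtain ⟨k, hk⟩ := hW.isPGroup.exists_card_eq
  have comap_le : V.comap (QuotientGroup.mk' L) ≤ (sectionAction W).ker := by
    refine comap_le_ker_sectionAction hW_normal hV_normal
      (Subgroup.disjoint_of_coprime_natCard (Nat.Coprime.symm ?_))
    exact hk ▸ (hqr.prime_left.coprime_iff_not_dvd.2
      (mt (·.trans (Subgroup.card_map_dvd _ _)) hq_comap)).pow_left k
  have hrL : ¬ r ∣ Nat.card L := fun hr ↦
    hW.not_dvd_card_ker_sectionAction hqr.toComplementAdj hrK <|
      (hr.trans (Dvd.intro _ (card_comap_mk' L V).symm)).trans (Subgroup.card_dvd_of_le comap_le)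
  obtain ⟨B, ⟨e⟩, hB⟩ := exists_mulEquiv_of_not_dvd_card hqr.prime_left hW.isPGroup hqK
  obtain ⟨x, hxB, hx⟩ := hB r hqr.prime_right (hW.dvd_index hqr.toComplementAdj hrK)
  have hB_le : B ≤ (sectionAction V).ker := hV.le_ker_sectionAction adj hqr.toComplementAdj hpq.ne
    hrL (hW.isPGroup.of_equiv e.symm) hxB hx
  refine hV.not_dvd_card_ker_sectionAction hpq.toComplementAdj hqL ?_
  exact ((hW.dvd_card hqr.prime_left).trans (Nat.card_congr e.toEquiv).symm.dvd).trans
    (Subgroup.card_dvd_of_le hB_le)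

end FrobeniusArrow

end FrobeniusArrow

section NonsolvableEdge

variable {G : Type*} [Group G] {p q r t : ℕ}

/-- No solvable normal subgroup of `G` has order divisible by `t`: for prime `t`, the solvable
radical of `G` has order prime to `t`. -/
def RadicalCoprime (G : Type*) [Group G] (t : ℕ) : Prop :=
  ∀ K : Subgroup G, K.Normal → Group.IsSolvable K → ¬ t ∣ Nat.card K

/-- The edges of the complement of the prime graph that come from a nonabelian chief factor,
recorded by what this implies: both ends divide `60 = |A₅|` and not the order of the
solvable radical. -/
structure NonsolvableEdge (G : Type*) [Group G] (p q : ℕ) : Prop extends ComplementAdj G p q where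
  left_dvd_sixty : p ∣ 60
  right_dvd_sixty : q ∣ 60
  radicalCoprime_left : RadicalCoprime G p
  radicalCoprime_right : RadicalCoprime G q

theorem RadicalCoprime.not_isSolvable (h : RadicalCoprime G t) (ht : t ∣ Nat.card G) :
    ¬ Group.IsSolvable G := fun hG ↦
  h ⊤ inferInstance (isSolvable_top_iff.2 hG) (by rwa [Subgroup.card_top])

theorem NonsolvableEdge.symm (h : NonsolvableEdge G p q) : NonsolvableEdge G q p :=
  ⟨h.toComplementAdj.symm, h.right_dvd_sixty, h.left_dvd_sixty, h.radicalCoprime_right,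
    h.radicalCoprime_left⟩

theorem NonsolvableEdge.not_isSolvable (h : NonsolvableEdge G p q) : ¬ Group.IsSolvable G :=
  h.radicalCoprime_left.not_isSolvable h.dvd_left

theorem FrobeniusArrow.not_radicalCoprime (h : FrobeniusArrow G p q) (hG : IsPseudoSolvable G)
    (hp : p ∣ 60) : ¬ RadicalCoprime G p := by
  intro hrad
  obtain ⟨L, _, V, hV_normal, hV, hpL, -⟩ := h.exists_section
  refine hrad (V.comap (QuotientGroup.mk' L)) inferInstance (isSolvable_comap ?_ hV.isSolvable) ?_
  · rw [QuotientGroup.ker_mk']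
    exact hG.isSolvable_of_not_dvd hp hpL
  · rw [card_comap_mk']
    exact (hV.dvd_card h.prime_left).mul_left _

variable [Finite G]

namespace FrobeniusArrow

theorem not_dvd_sixty (hpq : FrobeniusArrow G p q) (hqr : FrobeniusArrow G q r)
    (hG : IsPseudoSolvable G) (hns : ¬ Group.IsSolvable G) : ¬ r ∣ 60 := fun hr ↦
  hns ((Group.isSolvable_iff_subgroup_quotient (commutator G)).2
    ⟨hG.isSolvable_of_not_dvd hr (hpq.not_dvd_card_commutator hqr),
      Group.isSolvable_of_comm (mul_comm (G := Abelianization G))⟩)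

/-- Elements of order `2` invert `V`, so they lie in the preimage of the centre of `MulAut V`. -/
theorem not_radicalCoprime_two (h : FrobeniusArrow G p 2) (hG : IsPseudoSolvable G) :
    ¬ RadicalCoprime G 2 := by
  intro hrad
  obtain ⟨L, _, V, _, hV, -, hL⟩ := h.exists_section
  obtain ⟨x, -, hx⟩ := exists_mem_orderOf_eq (⊤ : Subgroup G) Nat.prime_two
    (by rw [Subgroup.card_top]; exact h.dvd_right)
  have apply_eq_inv : ⇑(sectionAction V x) = (·⁻¹) := by
    refine (hV.fixedPointFree_sectionAction h.toComplementAdj hL hx).coe_eq_inv_of_involutive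
      fun v ↦ ?_
    change (sectionAction V x * sectionAction V x) v = v
    rw [← map_mul, ← sq, ← hx, pow_orderOf_eq_one, map_one, MulAut.one_apply]
  have mem_center : sectionAction V x ∈ Subgroup.center (MulAut V) :=
    Subgroup.mem_center_iff.2 fun α ↦ MulEquiv.ext fun v ↦ by
      rw [MulAut.mul_apply, MulAut.mul_apply, congrFun apply_eq_inv, congrFun apply_eq_inv, map_inv]
  have ker_isSolvable : Group.IsSolvable (sectionAction V).ker :=
    hG.isSolvable_of_not_dvd (by decide) (hV.not_dvd_card_ker_sectionAction h.toComplementAdj hL)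
  refine hrad ((Subgroup.center (MulAut V)).comap (sectionAction V)) inferInstance
    (isSolvable_comap ker_isSolvable (Group.isSolvable_of_comm mul_comm)) ?_
  rw [← hx]
  exact orderOf_dvd_natCard_of_mem (Subgroup.mem_comap.2 mem_center)

/-- A `2`-subgroup normalised by an element of order `3` would act trivially on `V`. -/
theorem isSolvable_of_complementAdj_two_three (h : FrobeniusArrow G p 3)
    (h23 : ComplementAdj G 2 3) (hp : p ≠ 2) (hG : IsPseudoSolvable G) : Group.IsSolvable G := by
  by_contra hns
  obtain ⟨L, _, V, _, hV, -, hL⟩ := h.exists_section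
  obtain ⟨T, hT, ⟨x, hxT, hx⟩, hT_le⟩ := hG.exists_isPGroup_normalizer hns
  exact hT_le _ inferInstance (hV.le_ker_sectionAction h.toComplementAdj h23 hp hL hT hxT hx)
    (hG.isSolvable_of_not_dvd (by decide) (hV.not_dvd_card_ker_sectionAction h.toComplementAdj hL))

end FrobeniusArrow

namespace IsMinimalNormal

variable {L : Subgroup G} [L.Normal] {N : Subgroup (G ⧸ L)}

theorem frobeniusArrow (hN : IsMinimalNormal N) (hcomm : IsMulCommutative N)
    (h : ComplementAdj G p q) (hpL : ¬ p ∣ Nat.card L) (hqL : ¬ q ∣ Nat.card L)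
    (hpN : p ∣ Nat.card N) : FrobeniusArrow G p q :=
  ⟨h, L, ‹_›, N, hN.normal, hN.isElementaryAbelian h.prime_left hpN, hpL, hqL⟩

theorem radicalCoprime (hN : IsMinimalNormal N) (hns : ¬ Group.IsSolvable N)
    (h : ComplementAdj G p q) (hpL : ¬ p ∣ Nat.card L) (hqN : q ∣ Nat.card N) :
    RadicalCoprime G p := by
  intro K hK hsolv hp
  have map_normal := hK.map _ (QuotientGroup.mk'_surjective L)
  rcases hN.disjoint_or_le map_normal with hdisj | hle
  · obtain ⟨x, hxK, hx⟩ := exists_mem_orderOf_eq K h.prime_left hp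
    obtain ⟨a, ha, haq⟩ := exists_mem_orderOf_eq N h.prime_right hqN
    have hx_mk := orderOf_mk_eq_of_not_dvd_card h.prime_left hpL hx
    have mk_eq_one : (x : G ⧸ L) = 1 :=
      h.eq_one_of_commute (QuotientGroup.mk'_surjective L) (k := 1)
        (by rw [pow_one, ← hx_mk, pow_orderOf_eq_one]) haq
        (commute_of_disjoint_of_normal map_normal hN.normal hdisj
          (Subgroup.mem_map_of_mem _ hxK) ha)
    rw [mk_eq_one, orderOf_one] at hx_mk
    exact h.prime_left.one_lt.ne hx_mk
  · exact hns (isSolvable_of_le hle (isSolvable_map _ hsolv))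

theorem nonsolvableEdge (hN : IsMinimalNormal N) (hcomm : ¬ IsMulCommutative N)
    (hG : IsPseudoSolvable G) (h : ComplementAdj G p q) (hpL : ¬ p ∣ Nat.card L)
    (hqL : ¬ q ∣ Nat.card L) (hpN : p ∣ Nat.card N) : NonsolvableEdge G p q := by
  obtain ⟨A, hA⟩ := exists_isSimpleComponent hN.normal hN.ne_bot
  have := hA.isSimpleGroup
  have hA_ns : ¬ Group.IsSolvable A := fun hsolv ↦ hcomm <|
    have : IsMulCommutative A := ⟨⟨IsSimpleGroup.comm_iff_isSolvable.2 hsolv⟩⟩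
    hA.isMulCommutative hN
  have hN_ns : ¬ Group.IsSolvable N := mt (isSolvable_of_le hA.le) hA_ns
  obtain ⟨e⟩ := hG.nonempty_mulEquiv_subgroup_quotient hA_ns
  have card_A : Nat.card A = 60 := (Nat.card_congr e.toEquiv).trans natCard_alternatingGroup_five
  have hp60 : p ∣ 60 := card_A ▸ hA.dvd_card hN hcomm h.prime_left hpN
  have hqGL : q ∣ Nat.card (G ⧸ L) := (h.prime_right.dvd_mul.1
    (L.card_eq_card_quotient_mul_card_subgroup ▸ h.dvd_right)).resolve_right hqL
  have hq60 : q ∣ 60 := by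
    by_contra hq60
    obtain ⟨y, hy⟩ :=
      hA.isConjSeparated.exists_orderOf_eq_mul e h.prime_right hq60 hqGL h.prime_left hp60
    obtain ⟨g, hg⟩ := exists_orderOf_eq_of_surjective (QuotientGroup.mk'_surjective L) y
    exact h.symm.not_exists ⟨g, hg.trans hy⟩
  have hqN : q ∣ Nat.card N := (card_A ▸ hq60).trans (Subgroup.card_dvd_of_le hA.le)
  exact ⟨h, hp60, hq60, hN.radicalCoprime hN_ns h hpL hqN, hN.radicalCoprime hN_ns h.symm hqL hpN⟩

end IsMinimalNormal

theorem exists_isMinimalNormal_quotient (hp : p.Prime) (hq : q.Prime) (hpG : p ∣ Nat.card G) :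
    ∃ (L : Subgroup G) (_ : L.Normal) (N : Subgroup (G ⧸ L)), ¬ p ∣ Nat.card L ∧
      ¬ q ∣ Nat.card L ∧ IsMinimalNormal N ∧ (p ∣ Nat.card N ∨ q ∣ Nat.card N) := by
  obtain ⟨L, hL⟩ := (Set.toFinite {L : Subgroup G | L.Normal ∧ ¬ p ∣ Nat.card L ∧
    ¬ q ∣ Nat.card L}).exists_maximal ⟨⊥, inferInstance, by
      rw [Subgroup.card_bot]
      exact ⟨hp.not_dvd_one, hq.not_dvd_one⟩⟩
  obtain ⟨hL_normal, hpL, hqL⟩ := hL.prop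
  have : Nontrivial (G ⧸ L) := by
    rw [QuotientGroup.nontrivial_iff]
    rintro rfl
    exact hpL (by rwa [Subgroup.card_top])
  obtain ⟨N, -, hN⟩ := exists_isMinimalNormal_le (H := G ⧸ L) (C := ⊤) inferInstance top_ne_bot
  refine ⟨L, hL_normal, N, hpL, hqL, hN, ?_⟩
  by_contra! hpq
  have := hN.normal
  have comap_le : N.comap (QuotientGroup.mk' L) ≤ L := by
    refine hL.le_of_ge ⟨inferInstance, ?_⟩ fun x hx ↦ ?_
    · rw [card_comap_mk', hp.dvd_mul, hq.dvd_mul]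
      tauto
    · rw [Subgroup.mem_comap, QuotientGroup.mk'_apply, (QuotientGroup.eq_one_iff x).2 hx]
      exact one_mem N
  refine hN.ne_bot ((Subgroup.eq_bot_iff_forall N).2 fun n hn ↦ ?_)
  obtain ⟨x, rfl⟩ := QuotientGroup.mk_surjective n
  exact (QuotientGroup.eq_one_iff x).2 (comap_le hn)

theorem ComplementAdj.frobeniusArrow_or_nonsolvableEdge (h : ComplementAdj G p q)
    (hG : IsPseudoSolvable G) :
    FrobeniusArrow G p q ∨ FrobeniusArrow G q p ∨ NonsolvableEdge G p q := by
  obtain ⟨L, _, N, hpL, hqL, hN, hpqN⟩ :=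
    exists_isMinimalNormal_quotient h.prime_left h.prime_right h.dvd_left
  by_cases hcomm : IsMulCommutative N
  · rcases hpqN with hpN | hqN
    · exact .inl (hN.frobeniusArrow hcomm h hpL hqL hpN)
    · exact .inr (.inl (hN.frobeniusArrow hcomm h.symm hqL hpL hqN))
  · rcases hpqN with hpN | hqN
    · exact .inr (.inr (hN.nonsolvableEdge hcomm hG h hpL hqL hpN))
    · exact .inr (.inr (hN.nonsolvableEdge hcomm hG h.symm hqL hpL hqN).symm)

end NonsolvableEdge

section Relation

variable {α : Type*} {R : α → α → Prop}

/-- Colour a vertex by the length of the longest walk ending there, as in the Gallai–Roy theorem. -/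
theorem exists_coloring_of_no_walk (h : ∀ a b c d, R a b → R b c → R c d → False) :
    ∃ c : α → Fin 3, ∀ a b, R a b → c a ≠ c b := by
  classical
  refine ⟨fun a ↦ if ∃ x y, R x y ∧ R y a then 2 else if ∃ y, R y a then 1 else 0,
    fun a b hab ↦ ?_⟩
  have ha : ¬ ∃ x y, R x y ∧ R y a := fun ⟨x, y, hxy, hya⟩ ↦ h x y a b hxy hya hab
  have hb : ∃ y, R y b := ⟨a, hab⟩
  by_cases hpred : ∃ y, R y a
  · obtain ⟨y, hya⟩ := hpred
    have hb_walk : ∃ x y, R x y ∧ R y b := ⟨y, a, hya, hab⟩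
    simp only [if_neg ha, if_pos hb_walk, if_pos (⟨y, hya⟩ : ∃ y, R y a)]
    decide
  · simp only [if_neg ha, if_neg hpred, if_pos hb]
    split_ifs <;> decide

theorem exists_transitive_triple (h : ∀ a b c d, R a b → R b c → R c d → False) {a b c : α}
    (hab : R a b ∨ R b a) (hac : R a c ∨ R c a) (hbc : R b c ∨ R c b) :
    ∃ u v w, R u v ∧ R v w ∧ R u w ∧ (a = u ∨ a = v ∨ a = w) := by
  rcases hab with hab | hba <;> rcases hac with hac | hca <;> rcases hbc with hbc | hcb
  · exact ⟨a, b, c, hab, hbc, hac, .inl rfl⟩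
  · exact ⟨a, c, b, hac, hcb, hab, .inl rfl⟩
  · exact (h a b c a hab hbc hca).elim
  · exact ⟨c, a, b, hca, hab, hcb, .inr (.inl rfl)⟩
  · exact ⟨b, a, c, hba, hac, hbc, .inr (.inl rfl)⟩
  · exact (h a c b a hac hcb hba).elim
  · exact ⟨b, c, a, hbc, hca, hba, .inr (.inr rfl)⟩
  · exact ⟨c, b, a, hcb, hba, hca, .inr (.inr rfl)⟩

end Relation

section Orientation

variable {G : Type*} [Group G] {a b c d p q r u v w : ℕ}

/-- The orientation of the complement of the prime graph: along `FrobeniusArrow`s, and from the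
smaller to the larger prime on the remaining edges. -/
def OrientedEdge (G : Type*) [Group G] (u v : ℕ) : Prop :=
  FrobeniusArrow G u v ∨ (NonsolvableEdge G u v ∧ u < v)

theorem OrientedEdge.complementAdj (h : OrientedEdge G u v) : ComplementAdj G u v :=
  h.elim (·.toComplementAdj) (·.1.toComplementAdj)

theorem NonsolvableEdge.right_eq (h : NonsolvableEdge G p q) : q = 2 ∨ q = 3 ∨ q = 5 :=
  (prime_dvd_sixty_iff h.prime_right).1 h.right_dvd_sixty

theorem NonsolvableEdge.eq_two_three_five (huv : NonsolvableEdge G u v)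
    (hvw : NonsolvableEdge G v w) (huv_lt : u < v) (hvw_lt : v < w) : u = 2 ∧ v = 3 ∧ w = 5 := by
  have := huv.symm.right_eq
  have := huv.right_eq
  have := hvw.right_eq
  omega

theorem NonsolvableEdge.not_frobeniusArrow (h : NonsolvableEdge G u v) (hG : IsPseudoSolvable G) :
    ¬ FrobeniusArrow G v w := fun hvw ↦
  hvw.not_radicalCoprime hG h.right_dvd_sixty h.radicalCoprime_right

variable [Finite G]

theorem NonsolvableEdge.eq_three_five (hvw : NonsolvableEdge G v w)
    (huv : FrobeniusArrow G u v) (hlt : v < w) (hG : IsPseudoSolvable G) : v = 3 ∧ w = 5 := by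
  have hv : v ≠ 2 := by
    rintro rfl
    exact huv.not_radicalCoprime_two hG hvw.radicalCoprime_left
  have := hvw.symm.right_eq
  have := hvw.right_eq
  omega

namespace IsPseudoSolvable

theorem orientedEdge_or_orientedEdge (hG : IsPseudoSolvable G) (h : ComplementAdj G p q) :
    OrientedEdge G p q ∨ OrientedEdge G q p := by
  rcases h.frobeniusArrow_or_nonsolvableEdge hG with hpq | hqp | hns
  · exact .inl (.inl hpq)
  · exact .inr (.inl hqp)
  · exact h.ne.lt_or_gt.imp (.inr ⟨hns, ·⟩) (.inr ⟨hns.symm, ·⟩)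

theorem not_orientedWalk (hG : IsPseudoSolvable G) (a b c d : ℕ) :
    OrientedEdge G a b → OrientedEdge G b c → OrientedEdge G c d → False := by
  rintro (hab | ⟨hab, hab_lt⟩) (hbc | ⟨hbc, hbc_lt⟩) (hcd | ⟨hcd, hcd_lt⟩)
  · exact hab.not_chain hbc hcd
  · exact hab.not_dvd_sixty hbc hG hcd.not_isSolvable hcd.left_dvd_sixty
  · exact hbc.not_frobeniusArrow hG hcd
  · have := hbc.eq_three_five hab hbc_lt hG
    have := hbc.eq_two_three_five hcd hbc_lt hcd_lt
    omega
  · exact hab.not_frobeniusArrow hG hbc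
  · exact hab.not_frobeniusArrow hG hbc
  · exact hbc.not_frobeniusArrow hG hcd
  · have := hab.eq_two_three_five hbc hab_lt hbc_lt
    have := hbc.eq_two_three_five hcd hbc_lt hcd_lt
    omega

theorem transitive_triple_eq (hG : IsPseudoSolvable G) (huv : OrientedEdge G u v)
    (hvw : OrientedEdge G v w) (huw : ComplementAdj G u w) :
    v = 3 ∧ w = 5 ∧ NonsolvableEdge G v w ∧ (u = 2 ∨ FrobeniusArrow G u v) := by
  rcases huv with huv | ⟨huv, huv_lt⟩ <;> rcases hvw with hvw | ⟨hvw, hvw_lt⟩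
  · exact (huw.not_exists (huv.exists_orderOf_eq_mul hvw huw.ne)).elim
  · obtain ⟨hv, hw⟩ := hvw.eq_three_five huv hvw_lt hG
    exact ⟨hv, hw, hvw, .inr huv⟩
  · exact (huv.not_frobeniusArrow hG hvw).elim
  · obtain ⟨hu, hv, hw⟩ := huv.eq_two_three_five hvw huv_lt hvw_lt
    exact ⟨hv, hw, hvw, .inl hu⟩

theorem exists_coloring (hG : IsPseudoSolvable G) :
    ∃ c : ℕ → Fin 3, ∀ p q, ComplementAdj G p q → c p ≠ c q := by
  obtain ⟨c, hc⟩ := exists_coloring_of_no_walk hG.not_orientedWalk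
  exact ⟨c, fun p q h ↦ (hG.orientedEdge_or_orientedEdge h).elim (hc p q) fun h ↦ (hc q p h).symm⟩

theorem exists_triangle_three_five (hG : IsPseudoSolvable G) (hpq : ComplementAdj G p q)
    (hpr : ComplementAdj G p r) (hqr : ComplementAdj G q r) :
    ∃ u, ComplementAdj G u 3 ∧ ComplementAdj G u 5 ∧ NonsolvableEdge G 3 5 ∧
      (u = 2 ∨ FrobeniusArrow G u 3) ∧ (p = u ∨ p = 3 ∨ p = 5) := by
  obtain ⟨u, v, w, huv, hvw, huw, hp⟩ := exists_transitive_triple hG.not_orientedWalk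
    (hG.orientedEdge_or_orientedEdge hpq) (hG.orientedEdge_or_orientedEdge hpr)
    (hG.orientedEdge_or_orientedEdge hqr)
  obtain ⟨rfl, rfl, hns, hu⟩ := hG.transitive_triple_eq huv hvw huw.complementAdj
  exact ⟨u, huv.complementAdj, huw.complementAdj, hns, hu, hp⟩

end IsPseudoSolvable

end Orientation

section Triangles

variable {G : Type*} [Group G]

theorem triangle235_iff :
    Triangle235 G ↔ ComplementAdj G 2 3 ∧ ComplementAdj G 2 5 ∧ ComplementAdj G 3 5 :=
  ⟨fun ⟨h2, h3, h5, h6, h10, h15⟩ ↦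
    ⟨⟨Nat.prime_two, Nat.prime_three, by decide, h2, h3, h6⟩,
      ⟨Nat.prime_two, Nat.prime_five, by decide, h2, h5, h10⟩,
      ⟨Nat.prime_three, Nat.prime_five, by decide, h3, h5, h15⟩⟩,
    fun ⟨h23, h25, h35⟩ ↦ ⟨h23.dvd_left, h23.dvd_right, h25.dvd_right, h23.not_exists,
      h25.not_exists, h35.not_exists⟩⟩

theorem triangleP35_iff : TriangleP35 G ↔
    ∃ p ≠ 2, ComplementAdj G p 3 ∧ ComplementAdj G p 5 ∧ ComplementAdj G 3 5 := by
  constructor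
  · rintro ⟨p, hp, hp235, hpG, h3, h5, h3p, h5p, h15⟩
    simp only [Set.mem_insert_iff, Set.mem_singleton_iff, not_or] at hp235
    obtain ⟨hp2, hp3, hp5⟩ := hp235
    exact ⟨p, hp2, (⟨Nat.prime_three, hp, Ne.symm hp3, h3, hpG, h3p⟩ : ComplementAdj G 3 p).symm,
      (⟨Nat.prime_five, hp, Ne.symm hp5, h5, hpG, h5p⟩ : ComplementAdj G 5 p).symm,
      ⟨Nat.prime_three, Nat.prime_five, by decide, h3, h5, h15⟩⟩
  · rintro ⟨p, hp2, hp3, hp5, h35⟩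
    refine ⟨p, hp3.prime_left, ?_, hp3.dvd_left, hp3.dvd_right, hp5.dvd_right,
      hp3.symm.not_exists, hp5.symm.not_exists, h35.not_exists⟩
    simp only [Set.mem_insert_iff, Set.mem_singleton_iff, not_or]
    exact ⟨hp2, hp3.ne, hp5.ne⟩

theorem complementTriangleFree_iff : ComplementTriangleFree G ↔
    ∀ p q r, ComplementAdj G p q → ComplementAdj G p r → ¬ ComplementAdj G q r := by
  constructor
  · intro h p q r hpq hpr hqr
    exact h ⟨p, q, r, hpq.prime_left, hpq.prime_right, hpr.prime_right, hpq.ne, hpr.ne, hqr.ne,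
      hpq.dvd_left, hpq.dvd_right, hpr.dvd_right, hpq.not_exists, hpr.not_exists, hqr.not_exists⟩
  · rintro h ⟨p, q, r, hp, hq, hr, hpq, hpr, hqr, hpG, hqG, hrG, hpq_ord, hpr_ord, hqr_ord⟩
    exact h p q r ⟨hp, hq, hpq, hpG, hqG, hpq_ord⟩ ⟨hp, hr, hpr, hpG, hrG, hpr_ord⟩
      ⟨hq, hr, hqr, hqG, hrG, hqr_ord⟩

theorem Triangle235.not_complementTriangleFree (h : Triangle235 G) :
    ¬ ComplementTriangleFree G := fun hfree ↦
  have ⟨h23, h25, h35⟩ := triangle235_iff.1 h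
  complementTriangleFree_iff.1 hfree 2 3 5 h23 h25 h35

theorem TriangleP35.not_complementTriangleFree (h : TriangleP35 G) :
    ¬ ComplementTriangleFree G := fun hfree ↦
  have ⟨p, _, hp3, hp5, h35⟩ := triangleP35_iff.1 h
  complementTriangleFree_iff.1 hfree p 3 5 hp3 hp5 h35

namespace IsPseudoSolvable

variable [Finite G]

theorem triangle235_or_triangleP35 (hG : IsPseudoSolvable G) (h : ¬ ComplementTriangleFree G) :
    Triangle235 G ∨ TriangleP35 G := by
  rw [complementTriangleFree_iff] at h
  push Not at h
  obtain ⟨p, q, r, hpq, hpr, hqr⟩ := h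
  obtain ⟨u, hu3, hu5, h35, -, -⟩ := hG.exists_triangle_three_five hpq hpr hqr
  rcases eq_or_ne u 2 with rfl | hu
  · exact .inl (triangle235_iff.2 ⟨hu3, hu5, h35.toComplementAdj⟩)
  · exact .inr (triangleP35_iff.2 ⟨u, hu, hu3, hu5, h35.toComplementAdj⟩)

theorem not_triangle235_and_triangleP35 (hG : IsPseudoSolvable G) :
    ¬ (Triangle235 G ∧ TriangleP35 G) := by
  rintro ⟨h235, hP35⟩
  obtain ⟨p, hp2, hp3, hp5, h35⟩ := triangleP35_iff.1 hP35
  obtain ⟨u, -, -, hns, hu, hpu⟩ := hG.exists_triangle_three_five hp3 hp5 h35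
  obtain rfl : p = u := (hpu.resolve_right (not_or.2 ⟨hp3.ne, hp5.ne⟩))
  exact hns.not_isSolvable ((hu.resolve_left hp2).isSolvable_of_complementAdj_two_three
    (triangle235_iff.1 h235).1 hp2 hG)

end IsPseudoSolvable

end Triangles

/-- The complement of the prime graph of a pseudo-solvable group is 3-colorable,
and exactly one of three mutually exclusive situations occurs: the complement is
triangle-free, or `{2,3,5}` is a triangle, or `{p,3,5}` is a triangle for some
prime `p ∉ {2,3,5}`. -/
theorem pseudo_solvable_trichotomy
    (G : Type*) [Group G] [Finite G] (hG : IsPseudoSolvable G) :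
    (∃ c : ℕ → Fin 3, ∀ p q : ℕ, p.Prime → q.Prime → p ≠ q →
      p ∣ Nat.card G → q ∣ Nat.card G →
      (¬ ∃ g : G, orderOf g = p * q) → c p ≠ c q) ∧
    ((ComplementTriangleFree G ∧ ¬ Triangle235 G ∧ ¬ TriangleP35 G) ∨
     (¬ ComplementTriangleFree G ∧ Triangle235 G ∧ ¬ TriangleP35 G) ∨
     (¬ ComplementTriangleFree G ∧ ¬ Triangle235 G ∧ TriangleP35 G)) := by
  obtain ⟨c, hc⟩ := hG.exists_coloring
  refine ⟨⟨c, fun p q hp hq hpq hpG hqG hno ↦ hc p q ⟨hp, hq, hpq, hpG, hqG, hno⟩⟩, ?_⟩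
  have h235 : Triangle235 G → ¬ ComplementTriangleFree G :=
    Triangle235.not_complementTriangleFree
  have hP35 : TriangleP35 G → ¬ ComplementTriangleFree G :=
    TriangleP35.not_complementTriangleFree
  have hor := hG.triangle235_or_triangleP35
  have hand := hG.not_triangle235_and_triangleP35
  tauto
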